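/- arXiv:1810.06095 — 5 statements merged into one kernel-verified Lean document; each statement's English description precedes it below -/
import Mathlib

section
/- Fix σ > 0, ρ > 0 and α ∈ ℝ, and let (γ_n) be a sequence of positive reals with γ_n/n^α → ρ as n → ∞. For each n let μ_n be the Gaussian measure N(0, σ²·I_n) on ℝⁿ. Then the limit as n → ∞ of ∫_{ℝⁿ} exp(−(2γ_n·κ_{n-1}/(n·κ_n))·|y|) dμ_n(y) equals 0 if α > 0, equals exp(−√(2/π)·ρ·σ) if α = 0, and equals 1 if α < 0. -/
open Filter Real MeasureTheory ProbabilityTheory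

/-- `κ n`, the volume of the unit ball in `ℝⁿ`. -/
noncomputable def kappa (n : ℕ) : ℝ := Real.pi ^ ((n : ℝ) / 2) / Real.Gamma ((n : ℝ) / 2 + 1)

/-- The Gaussian measure `N(0, σ² I_n)` on `ℝⁿ`. -/
noncomputable def gaussianPi (n : ℕ) (σ : ℝ) : Measure (Fin n → ℝ) :=
  Measure.pi fun _ => gaussianReal 0 ⟨σ ^ 2, sq_nonneg σ⟩

/-!
Realise the coordinates of `y` as the first `n` terms of one i.i.d. sequence. By the strong law of
large numbers `|y| / √n → σ` almost surely, so by dominated convergence the integral of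
`exp (-c n * |y|)` converges to `exp (-s * σ)` if `c n * √n → s`, and to `0` if `c n * √n → ∞`.
Log-convexity of `Γ` gives `Γ (x + a) ∼ x ^ a * Γ x`, hence
`2 * κ (n - 1) / (n * κ n) * √n → √(2 / π)`, so that `c n * √n` behaves like `√(2 / π) * γ n` for
`c n = 2 * γ n * κ (n - 1) / (n * κ n)`.
-/

open scoped Topology

section GammaRatio

variable {a x : ℝ}

lemma Gamma_add_le_rpow_mul_Gamma (ha : 0 < a) (ha1 : a < 1) (hx : 0 < x) :
    Gamma (x + a) ≤ x ^ a * Gamma x := by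
  have hΓ : 0 < Gamma x := Gamma_pos_of_pos hx
  calc Gamma (x + a) = Gamma ((1 - a) * x + a * (x + 1)) := by ring_nf
    _ ≤ Gamma x ^ (1 - a) * Gamma (x + 1) ^ a :=
      Gamma_mul_add_mul_le_rpow_Gamma_mul_rpow_Gamma hx (by linarith) (by linarith) ha (by ring)
    _ = x ^ a * (Gamma x ^ (1 - a) * Gamma x ^ a) := by
      rw [Gamma_add_one hx.ne', mul_rpow hx.le hΓ.le]; ring
    _ = x ^ a * Gamma x := by rw [← rpow_add hΓ, sub_add_cancel, rpow_one]

/-- The upper bound for the step `1 - a` from `x + a` is a lower bound for the step `a` from `x`. -/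
lemma div_rpow_le_Gamma_add_div (ha : 0 < a) (ha1 : a < 1) (hx : 0 < x) :
    (x / (x + a)) ^ (1 - a) ≤ Gamma (x + a) / (x ^ a * Gamma x) := by
  have hxa : 0 < x + a := by linarith
  have : 0 < Gamma x := Gamma_pos_of_pos hx
  have hstep : x * Gamma x ≤ (x + a) ^ (1 - a) * Gamma (x + a) := by
    have h := Gamma_add_le_rpow_mul_Gamma (sub_pos.2 ha1) (sub_lt_self 1 ha) hxa
    rwa [add_add_sub_cancel, Gamma_add_one hx.ne'] at h
  have hsplit : x ^ (1 - a) * x ^ a = x := by rw [← rpow_add hx, sub_add_cancel, rpow_one]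
  rw [div_rpow hx.le hxa.le, div_le_div_iff₀ (by positivity) (by positivity), ← mul_assoc, hsplit,
    mul_comm (Gamma (x + a))]
  exact hstep

lemma tendsto_div_add_const_atTop (b : ℝ) :
    Tendsto (fun x : ℝ => x / (x + b)) atTop (𝓝 1) := by
  have hsub : Tendsto (fun x : ℝ => 1 - b / (x + b)) atTop (𝓝 (1 - 0)) :=
    (tendsto_const_nhds.div_atTop (tendsto_atTop_add_const_right _ b tendsto_id)).const_sub 1
  rw [sub_zero] at hsub
  refine hsub.congr' ?_
  filter_upwards [eventually_gt_atTop (-b)] with x hx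
  have : x + b ≠ 0 := by linarith
  field_simp
  ring

lemma tendsto_Gamma_add_div_rpow_mul_Gamma (ha : 0 < a) (ha1 : a < 1) :
    Tendsto (fun x => Gamma (x + a) / (x ^ a * Gamma x)) atTop (𝓝 1) := by
  have hlower : Tendsto (fun x : ℝ => (x / (x + a)) ^ (1 - a)) atTop (𝓝 1) := by
    simpa only [one_rpow] using
      (tendsto_div_add_const_atTop a).rpow_const (p := 1 - a) (Or.inl one_ne_zero)
  refine tendsto_of_tendsto_of_tendsto_of_le_of_le' hlower tendsto_const_nhds ?_ ?_
  · filter_upwards [eventually_gt_atTop 0] with x hx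
    exact div_rpow_le_Gamma_add_div ha ha1 hx
  · filter_upwards [eventually_gt_atTop 0] with x hx
    exact div_le_one_of_le₀ (Gamma_add_le_rpow_mul_Gamma ha ha1 hx)
      (mul_nonneg (rpow_nonneg hx.le a) (Gamma_nonneg_of_nonneg hx.le))

end GammaRatio

section UnitBall

lemma kappa_nonneg (n : ℕ) : 0 ≤ kappa n :=
  div_nonneg (rpow_nonneg pi_pos.le _) (Gamma_nonneg_of_nonneg (by positivity))

lemma two_mul_kappa_pred_div_mul_sqrt {n : ℕ} (hn : 0 < n) :
    2 * kappa (n - 1) / (n * kappa n) * √n =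
      √(2 / π) / (Gamma (n / 2 + 1 / 2) / ((n / 2 : ℝ) ^ (1 / 2 : ℝ) * Gamma (n / 2))) := by
  have hn' : (0 : ℝ) < n := by exact_mod_cast hn
  have : 0 < Gamma ((n : ℝ) / 2) := Gamma_pos_of_pos (by positivity)
  have : 0 < Gamma ((n : ℝ) / 2 + 1 / 2) := Gamma_pos_of_pos (by positivity)
  have hpred : kappa (n - 1) = π ^ ((n : ℝ) / 2) / √π / Gamma (n / 2 + 1 / 2) := by
    rw [kappa, Nat.cast_pred hn, sqrt_eq_rpow, ← rpow_sub pi_pos]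
    ring_nf
  have hself : kappa n = π ^ ((n : ℝ) / 2) / (n / 2 * Gamma (n / 2)) := by
    rw [kappa, Gamma_add_one (by positivity)]
  rw [hpred, hself, ← sqrt_eq_rpow, sqrt_div zero_le_two, sqrt_div hn'.le]
  field_simp

lemma tendsto_two_mul_kappa_pred_div_mul_sqrt :
    Tendsto (fun n : ℕ => 2 * kappa (n - 1) / (n * kappa n) * √n) atTop (𝓝 √(2 / π)) := by
  have hΓ := (tendsto_Gamma_add_div_rpow_mul_Gamma one_half_pos one_half_lt_one).comp
    (tendsto_natCast_atTop_atTop.atTop_div_const (two_pos (α := ℝ)))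
  have hlim := (tendsto_const_nhds (x := √(2 / π))).div hΓ one_ne_zero
  rw [div_one] at hlim
  refine hlim.congr' ?_
  filter_upwards [eventually_gt_atTop 0] with n hn
  exact (two_mul_kappa_pred_div_mul_sqrt hn).symm

end UnitBall

lemma integral_sq_pos {ν : Measure ℝ} (hν : Integrable (fun x => x ^ 2) ν)
    (hν0 : ∃ᵐ x ∂ν, x ≠ 0) : 0 < ∫ x, x ^ 2 ∂ν := by
  have hnonneg : 0 ≤ fun x : ℝ => x ^ 2 := fun x => sq_nonneg x
  refine (integral_nonneg hnonneg).lt_of_ne' fun h => hν0 ?_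
  filter_upwards [(integral_eq_zero_iff_of_nonneg hnonneg hν).1 h] with x hx
  exact not_not.2 (sq_eq_zero_iff.1 hx)

section StrongLaw

variable {X : Type*} [MeasurableSpace X] {ν : Measure X} [IsProbabilityMeasure ν]

lemma ae_tendsto_sum_div_infinitePi {f : X → ℝ} (hf : Measurable f) (hint : Integrable f ν) :
    ∀ᵐ ω ∂Measure.infinitePi fun _ : ℕ => ν,
      Tendsto (fun n : ℕ => (∑ i ∈ Finset.range n, f (ω i)) / n) atTop (𝓝 (∫ x, f x ∂ν)) := by
  have heval (i : ℕ) : MeasurePreserving (fun ω : ℕ → X => ω i) (Measure.infinitePi fun _ => ν) ν :=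
    measurePreserving_eval_infinitePi (fun _ => ν) i
  have hindep : iIndepFun (fun i ω => f (ω i)) (Measure.infinitePi fun _ : ℕ => ν) :=
    iIndepFun_infinitePi (X := fun _ => f) fun _ => hf
  have hident (i : ℕ) : IdentDistrib (fun ω => f (ω i)) (fun ω => f (ω 0))
      (Measure.infinitePi fun _ : ℕ => ν) (Measure.infinitePi fun _ : ℕ => ν) :=
    IdentDistrib.comp (u := f) ⟨(heval i).aemeasurable, (heval 0).aemeasurable,
      (heval i).map_eq.trans (heval 0).map_eq.symm⟩ hf
  have hmean : ∫ ω, f (ω 0) ∂(Measure.infinitePi fun _ : ℕ => ν) = ∫ x, f x ∂ν :=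
    (heval 0).hasLaw.integral_comp (f := f) hf.aestronglyMeasurable
  rw [← hmean]
  exact strong_law_ae_real (fun i (ω : ℕ → X) => f (ω i))
    ((heval 0).integrable_comp_of_integrable hint) (fun i j hij => hindep.indepFun hij) hident

variable (ν) in
lemma measurePreserving_infinitePi_pi_fin (n : ℕ) :
    MeasurePreserving (fun (ω : ℕ → X) (i : Fin n) => ω i)
      (Measure.infinitePi fun _ => ν) (Measure.pi fun _ => ν) where
  measurable := by fun_prop
  map_eq := by
    rw [← Measure.infinitePi_eq_pi]
    exact Measure.map_infinitePi_infinitePi_of_inj Fin.val_injective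

end StrongLaw

/-- The Laplace transform at `c` of the Euclidean norm of a random vector in `ℝⁿ` whose coordinates
are independent with law `ν`. -/
noncomputable def normLaplace (ν : Measure ℝ) (n : ℕ) (c : ℝ) : ℝ :=
  ∫ y : Fin n → ℝ, exp (-c * √(∑ i, y i ^ 2)) ∂Measure.pi fun _ => ν

section NormLaplace

variable {ν : Measure ℝ} [IsProbabilityMeasure ν]

lemma ae_tendsto_sqrt_sum_sq_div_sqrt (hν : Integrable (fun x => x ^ 2) ν) :
    ∀ᵐ ω ∂Measure.infinitePi fun _ : ℕ => ν,
      Tendsto (fun n : ℕ => √(∑ i ∈ Finset.range n, ω i ^ 2) / √n) atTop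
        (𝓝 √(∫ x, x ^ 2 ∂ν)) := by
  filter_upwards [ae_tendsto_sum_div_infinitePi (by fun_prop) hν] with ω hω
  simpa only [sqrt_div' _ (Nat.cast_nonneg _)] using hω.sqrt

lemma normLaplace_eq_integral_infinitePi (n : ℕ) (c : ℝ) :
    normLaplace ν n c = ∫ ω, exp (-c * √(∑ i ∈ Finset.range n, ω i ^ 2))
      ∂Measure.infinitePi fun _ : ℕ => ν := by
  have hproj := measurePreserving_infinitePi_pi_fin ν n
  rw [normLaplace, ← hproj.map_eq, integral_map hproj.aemeasurable
    (Measurable.aestronglyMeasurable (by fun_prop))]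
  simp only [Finset.sum_range]

lemma tendsto_normLaplace_of_ae_tendsto {c : ℕ → ℝ} {l : ℝ} (hc : ∀ᶠ n in atTop, 0 ≤ c n)
    (h : ∀ᵐ ω ∂Measure.infinitePi fun _ : ℕ => ν,
      Tendsto (fun n : ℕ => exp (-(c n * √n * (√(∑ i ∈ Finset.range n, ω i ^ 2) / √n)))) atTop
        (𝓝 l)) :
    Tendsto (fun n => normLaplace ν n (c n)) atTop (𝓝 l) := by
  simp only [normLaplace_eq_integral_infinitePi]
  have hl : ∫ _, l ∂Measure.infinitePi (fun _ : ℕ => ν) = l := by simp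
  rw [← hl]
  refine tendsto_integral_filter_of_dominated_convergence (fun _ => 1)
    (.of_forall fun n => Measurable.aestronglyMeasurable (by fun_prop)) ?_ (integrable_const 1) ?_
  · filter_upwards [hc] with n hn
    refine ae_of_all _ fun ω => ?_
    rw [norm_eq_abs, abs_exp, neg_mul]
    exact exp_le_one_iff.2 (neg_nonpos.2 (by positivity))
  · filter_upwards [h] with ω hω
    refine hω.congr' ?_
    filter_upwards [eventually_gt_atTop 0] with n hn
    field_simp

lemma tendsto_normLaplace {c : ℕ → ℝ} {s : ℝ} (hν : Integrable (fun x => x ^ 2) ν)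
    (hc : ∀ᶠ n in atTop, 0 ≤ c n) (hs : Tendsto (fun n : ℕ => c n * √n) atTop (𝓝 s)) :
    Tendsto (fun n => normLaplace ν n (c n)) atTop (𝓝 (exp (-(s * √(∫ x, x ^ 2 ∂ν))))) := by
  refine tendsto_normLaplace_of_ae_tendsto hc ?_
  filter_upwards [ae_tendsto_sqrt_sum_sq_div_sqrt hν] with ω hω
  exact (hs.mul hω).neg.rexp

lemma tendsto_normLaplace_zero {c : ℕ → ℝ} (hν : Integrable (fun x => x ^ 2) ν)
    (hν0 : ∃ᵐ x ∂ν, x ≠ 0) (hc : Tendsto (fun n : ℕ => c n * √n) atTop atTop) :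
    Tendsto (fun n => normLaplace ν n (c n)) atTop (𝓝 0) := by
  have hpos : 0 < √(∫ x, x ^ 2 ∂ν) := sqrt_pos.2 (integral_sq_pos hν hν0)
  have hc0 : ∀ᶠ n in atTop, 0 ≤ c n := by
    filter_upwards [hc.eventually_gt_atTop 0] with n hn
    exact (pos_of_mul_pos_left hn (sqrt_nonneg _)).le
  refine tendsto_normLaplace_of_ae_tendsto hc0 ?_
  filter_upwards [ae_tendsto_sqrt_sum_sq_div_sqrt hν] with ω hω
  exact tendsto_exp_neg_atTop_nhds_zero.comp (hc.atTop_mul_pos hpos hω)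

end NormLaplace

section RegularVariation

variable {u : ℕ → ℝ} {α ρ : ℝ}

lemma div_rpow_mul_rpow_eventuallyEq (u : ℕ → ℝ) (α : ℝ) :
    (fun n : ℕ => u n / (n : ℝ) ^ α * (n : ℝ) ^ α) =ᶠ[atTop] u := by
  filter_upwards [eventually_gt_atTop 0] with n hn
  exact div_mul_cancel₀ _ (rpow_pos_of_pos (by exact_mod_cast hn) α).ne'

lemma eventually_nonneg_of_tendsto_div_rpow (hρ : 0 < ρ)
    (hu : Tendsto (fun n : ℕ => u n / (n : ℝ) ^ α) atTop (𝓝 ρ)) : ∀ᶠ n in atTop, 0 ≤ u n := by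
  filter_upwards [hu.eventually_const_lt hρ, div_rpow_mul_rpow_eventuallyEq u α] with n hn hun
  rw [← hun]
  positivity

lemma tendsto_atTop_of_tendsto_div_rpow (hα : 0 < α) (hρ : 0 < ρ)
    (hu : Tendsto (fun n : ℕ => u n / (n : ℝ) ^ α) atTop (𝓝 ρ)) : Tendsto u atTop atTop :=
  (hu.pos_mul_atTop hρ ((tendsto_rpow_atTop hα).comp tendsto_natCast_atTop_atTop)).congr'
    (div_rpow_mul_rpow_eventuallyEq u α)

lemma tendsto_zero_of_tendsto_div_rpow (hα : α < 0)
    (hu : Tendsto (fun n : ℕ => u n / (n : ℝ) ^ α) atTop (𝓝 ρ)) : Tendsto u atTop (𝓝 0) := by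
  have hpow : Tendsto (fun n : ℕ => (n : ℝ) ^ α) atTop (𝓝 0) := by
    simpa only [neg_neg, Function.comp_def] using
      (tendsto_rpow_neg_atTop (neg_pos.2 hα)).comp tendsto_natCast_atTop_atTop
  rw [← mul_zero ρ]
  exact (hu.mul hpow).congr' (div_rpow_mul_rpow_eventuallyEq u α)

end RegularVariation

/-- The rate at which the zero cell of a stationary isotropic Poisson hyperplane tessellation of
intensity `γ` in `ℝⁿ` loses points: it contains `x` with probability
`exp (-zeroCellRate n γ * |x|)`. -/
noncomputable def zeroCellRate (n : ℕ) (γ : ℝ) : ℝ :=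
  2 * γ * kappa (n - 1) / (n * kappa n)

section ZeroCellRate

lemma zeroCellRate_nonneg (n : ℕ) {γ : ℝ} (hγ : 0 ≤ γ) : 0 ≤ zeroCellRate n γ :=
  div_nonneg (mul_nonneg (mul_nonneg zero_le_two hγ) (kappa_nonneg _))
    (mul_nonneg n.cast_nonneg (kappa_nonneg _))

lemma zeroCellRate_mul_sqrt (n : ℕ) (γ : ℝ) :
    zeroCellRate n γ * √n = 2 * kappa (n - 1) / (n * kappa n) * √n * γ := by
  rw [zeroCellRate]
  ring

variable {ν : Measure ℝ} [IsProbabilityMeasure ν] {γ : ℕ → ℝ}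

lemma tendsto_normLaplace_zeroCellRate {r : ℝ} (hν : Integrable (fun x => x ^ 2) ν)
    (hγ0 : ∀ᶠ n in atTop, 0 ≤ γ n) (hγ : Tendsto γ atTop (𝓝 r)) :
    Tendsto (fun n => normLaplace ν n (zeroCellRate n (γ n))) atTop
      (𝓝 (exp (-√(2 / π) * r * √(∫ x, x ^ 2 ∂ν)))) := by
  have hrate : Tendsto (fun n : ℕ => zeroCellRate n (γ n) * √n) atTop (𝓝 (√(2 / π) * r)) := by
    simpa only [zeroCellRate_mul_sqrt] using tendsto_two_mul_kappa_pred_div_mul_sqrt.mul hγ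
  simpa only [neg_mul] using
    tendsto_normLaplace hν (hγ0.mono fun n hn => zeroCellRate_nonneg n hn) hrate

lemma tendsto_normLaplace_zeroCellRate_zero (hν : Integrable (fun x => x ^ 2) ν)
    (hν0 : ∃ᵐ x ∂ν, x ≠ 0) (hγ : Tendsto γ atTop atTop) :
    Tendsto (fun n => normLaplace ν n (zeroCellRate n (γ n))) atTop (𝓝 0) := by
  refine tendsto_normLaplace_zero hν hν0 ?_
  simpa only [zeroCellRate_mul_sqrt] using
    tendsto_two_mul_kappa_pred_div_mul_sqrt.pos_mul_atTop (by positivity) hγ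

end ZeroCellRate

section GaussianReal

variable (m : ℝ) (v : NNReal)

lemma integrable_sq_gaussianReal : Integrable (fun x => x ^ 2) (gaussianReal m v) :=
  (memLp_id_gaussianReal 2).integrable_sq

lemma sqrt_integral_sq_gaussianReal {σ : ℝ} (hσ : 0 ≤ σ) :
    √(∫ x, x ^ 2 ∂gaussianReal 0 (σ ^ 2).toNNReal) = σ := by
  rw [← variance_of_integral_eq_zero aemeasurable_id' integral_id_gaussianReal,
    variance_fun_id_gaussianReal, coe_toNNReal _ (sq_nonneg σ), sqrt_sq hσ]

variable {v} in
lemma frequently_ne_zero_gaussianReal (hv : v ≠ 0) : ∃ᵐ x ∂gaussianReal m v, x ≠ 0 :=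
  have := nullSingletonClass_gaussianReal (μ := m) hv
  (Measure.ae_ne _ 0).frequently

lemma gaussianPi_eq_pi_toNNReal (n : ℕ) (σ : ℝ) :
    gaussianPi n σ = Measure.pi fun _ => gaussianReal 0 (σ ^ 2).toNNReal := by
  rw [toNNReal_of_nonneg (sq_nonneg σ)]
  rfl

end GaussianReal

theorem separation_gaussian_displacement_general {ν : Measure ℝ} [IsProbabilityMeasure ν]
    (hν : Integrable (fun x => x ^ 2) ν) (hν0 : ∃ᵐ x ∂ν, x ≠ 0) {γ : ℕ → ℝ} {ρ α : ℝ} (hρ : 0 < ρ)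
    (hγ : Tendsto (fun n : ℕ => γ n / (n : ℝ) ^ α) atTop (𝓝 ρ)) :
    (0 < α → Tendsto (fun n => normLaplace ν n (zeroCellRate n (γ n))) atTop (𝓝 0)) ∧
    (α = 0 → Tendsto (fun n => normLaplace ν n (zeroCellRate n (γ n))) atTop
      (𝓝 (exp (-√(2 / π) * ρ * √(∫ x, x ^ 2 ∂ν))))) ∧
    (α < 0 → Tendsto (fun n => normLaplace ν n (zeroCellRate n (γ n))) atTop (𝓝 1)) := by
  have hγ0 := eventually_nonneg_of_tendsto_div_rpow hρ hγ
  refine ⟨fun hα => ?_, fun hα => ?_, fun hα => ?_⟩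
  · exact tendsto_normLaplace_zeroCellRate_zero hν hν0
      (tendsto_atTop_of_tendsto_div_rpow hα hρ hγ)
  · have hlim : Tendsto γ atTop (𝓝 ρ) := by
      simpa only [hα, rpow_zero, div_one] using hγ
    exact tendsto_normLaplace_zeroCellRate hν hγ0 hlim
  · have hlim : Tendsto γ atTop (𝓝 0) := tendsto_zero_of_tendsto_div_rpow hα hγ
    simpa only [mul_zero, zero_mul, exp_zero] using tendsto_normLaplace_zeroCellRate hν hγ0 hlim

/-- Limit of the probability that a Gaussian perturbation (variance `σ²` per coordinate) of
the typical signal lies in its zero cell, when `γ_n ∼ ρ n^α`. -/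
theorem separation_gaussian_displacement (σ ρ α : ℝ) (hσ : 0 < σ) (hρ : 0 < ρ)
    (γ : ℕ → ℝ) (hγpos : ∀ n, 0 < γ n)
    (hγ : Tendsto (fun n : ℕ => γ n / (n : ℝ) ^ α) atTop (nhds ρ)) :
    (0 < α →
      Tendsto (fun n : ℕ =>
          ∫ y : Fin n → ℝ,
            Real.exp (-(2 * γ n * kappa (n - 1) / ((n : ℝ) * kappa n)) *
              Real.sqrt (∑ i, y i ^ 2)) ∂(gaussianPi n σ))
        atTop (nhds 0)) ∧
    (α = 0 →
      Tendsto (fun n : ℕ =>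
          ∫ y : Fin n → ℝ,
            Real.exp (-(2 * γ n * kappa (n - 1) / ((n : ℝ) * kappa n)) *
              Real.sqrt (∑ i, y i ^ 2)) ∂(gaussianPi n σ))
        atTop (nhds (Real.exp (-(Real.sqrt (2 / Real.pi)) * ρ * σ)))) ∧
    (α < 0 →
      Tendsto (fun n : ℕ =>
          ∫ y : Fin n → ℝ,
            Real.exp (-(2 * γ n * kappa (n - 1) / ((n : ℝ) * kappa n)) *
              Real.sqrt (∑ i, y i ^ 2)) ∂(gaussianPi n σ))
        atTop (nhds 1)) := by
  have hσ2 : (σ ^ 2).toNNReal ≠ 0 := (toNNReal_pos.2 (pow_pos hσ 2)).ne'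
  simpa only [normLaplace, zeroCellRate, gaussianPi_eq_pi_toNNReal,
    sqrt_integral_sq_gaussianReal hσ.le] using
    separation_gaussian_displacement_general (integrable_sq_gaussianReal 0 _)
      (frequently_ne_zero_gaussianReal 0 hσ2) hρ hγ
end

section
/- Fix ρ > 0 and let (γ_n) be a sequence of positive reals with γ_n/n → ρ as n → ∞. Define V_n = n!·κ_n·(n·κ_n/(2γ_n·κ_{n-1}))ⁿ. Then (1/n)·ln V_n → −ln ρ + ln π − 1/2 as n → ∞; consequently V_n → 0 if ρ > π/√e, and V_n → ∞ if ρ < π/√e. -/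
open Filter Real

open Topology
open scoped Nat

/-!
Log-convexity of `Γ` and `Γ(x + 1) = x Γ(x)` give Wendel's asymptotics `Γ(x + s) ∼ xˢ Γ(x)` for
`0 ≤ s ≤ 1`. For `s = 1/2` this says `√n κ_n / κ_{n-1} → √(2π)`. Since `∏_{k ≤ n} √k = √n!`,
averaging the logarithms of these ratios yields `(κ_n √n!)^(1/n) → √(2π)` as well. Hence
`V_n^(1/n) = (κ_n √n!)^(1/n) · (√n κ_n / κ_{n-1}) · √((n!)^(1/n) / n) · n / (2 γ_n)`, and by
Stirling's formula the right-hand side tends to `√(2π) · √(2π) · e^(-1/2) / (2ρ) = π / (ρ √e)`,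
which crosses `1` at `ρ = π / √e`.
-/

section LogGamma

variable {s x : ℝ}

lemma log_Gamma_add_one (hx : 0 < x) : log (Gamma (x + 1)) = log x + log (Gamma x) := by
  rw [Gamma_add_one hx.ne', log_mul hx.ne' (Gamma_pos_of_pos hx).ne']

lemma log_Gamma_add_le (hx : 0 < x) (hs₀ : 0 ≤ s) (hs₁ : s ≤ 1) :
    log (Gamma (x + s)) ≤ log (Gamma x) + s * log x := by
  have hconv := convexOn_log_Gamma.2 (Set.mem_Ioi.2 hx) (Set.mem_Ioi.2 (add_pos hx one_pos))
    (sub_nonneg.2 hs₁) hs₀ (sub_add_cancel 1 s)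
  simp only [smul_eq_mul, Function.comp_apply, log_Gamma_add_one hx] at hconv
  calc log (Gamma (x + s)) = log (Gamma ((1 - s) * x + s * (x + 1))) := by ring_nf
    _ ≤ (1 - s) * log (Gamma x) + s * (log x + log (Gamma x)) := hconv
    _ = log (Gamma x) + s * log x := by ring

lemma le_log_Gamma_add (hx : 0 < x) (hs₀ : 0 ≤ s) (hs₁ : s ≤ 1) :
    log (Gamma x) + log x - (1 - s) * log (x + s) ≤ log (Gamma (x + s)) := by
  have hupper := log_Gamma_add_le (add_pos_of_pos_of_nonneg hx hs₀) (sub_nonneg.2 hs₁)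
    (sub_le_self 1 hs₀)
  rw [add_assoc, add_sub_cancel, log_Gamma_add_one hx] at hupper
  linarith

lemma tendsto_log_Gamma_add_sub (hs₀ : 0 ≤ s) (hs₁ : s ≤ 1) :
    Tendsto (fun x ↦ log (Gamma (x + s)) - log (Gamma x) - s * log x) atTop (𝓝 0) := by
  have hlower : Tendsto (fun x ↦ -(1 - s) * (log (x + s) - log x)) atTop (𝓝 0) := by
    simpa only [mul_zero] using (tendsto_log_comp_add_sub_log s).const_mul (-(1 - s))
  refine tendsto_of_tendsto_of_tendsto_of_le_of_le' hlower tendsto_const_nhds ?_ ?_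
  · filter_upwards [eventually_gt_atTop 0] with x hx
    linarith [le_log_Gamma_add hx hs₀ hs₁]
  · filter_upwards [eventually_gt_atTop 0] with x hx
    linarith [log_Gamma_add_le hx hs₀ hs₁]

end LogGamma

section Sequences

variable {u : ℕ → ℝ} {l : ℝ}

lemma tendsto_div_natCast_of_tendsto_succ_sub
    (h : Tendsto (fun n ↦ u (n + 1) - u n) atTop (𝓝 l)) :
    Tendsto (fun n ↦ u n / n) atTop (𝓝 l) := by
  have hmean := h.cesaro.add (tendsto_const_div_atTop_nhds_zero_nat (u 0))
  rw [add_zero] at hmean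
  refine hmean.congr fun n ↦ ?_
  rw [Finset.sum_range_sub]
  ring

lemma natCast_mul_one_div_mul_eventuallyEq (u : ℕ → ℝ) :
    (fun n : ℕ ↦ (n : ℝ) * (1 / n * u n)) =ᶠ[atTop] u := by
  filter_upwards [eventually_ne_atTop 0] with n hn
  field_simp

lemma tendsto_zero_of_tendsto_one_div_mul_log_neg
    (h : Tendsto (fun n : ℕ ↦ 1 / (n : ℝ) * log (u n)) atTop (𝓝 l)) (hl : l < 0) :
    Tendsto u atTop (𝓝 0) := by
  have hlog : Tendsto (fun n ↦ log (u n)) atTop atBot :=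
    (tendsto_natCast_atTop_atTop.atTop_mul_neg hl h).congr' (natCast_mul_one_div_mul_eventuallyEq _)
  refine squeeze_zero_norm (fun n ↦ ?_) (tendsto_exp_atBot.comp hlog)
  simpa only [Function.comp_apply, log_abs, norm_eq_abs] using le_exp_log |u n|

lemma tendsto_atTop_of_tendsto_one_div_mul_log_pos (hu : ∀ᶠ n in atTop, 0 ≤ u n)
    (h : Tendsto (fun n : ℕ ↦ 1 / (n : ℝ) * log (u n)) atTop (𝓝 l)) (hl : 0 < l) :
    Tendsto u atTop atTop :=
  tendsto_atTop_mono' _ (hu.mono fun _ ↦ log_le_self) <|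
    (tendsto_natCast_atTop_atTop.atTop_mul_pos hl h).congr' (natCast_mul_one_div_mul_eventuallyEq _)

lemma tendsto_log_factorial_div_sub_log :
    Tendsto (fun n : ℕ ↦ log n ! / n - log n) atTop (𝓝 (-1)) := by
  have hstirling : Tendsto (fun n ↦ log (Stirling.stirlingSeq n) / n) atTop (𝓝 0) :=
    (Stirling.tendsto_stirlingSeq_sqrt_pi.log (by positivity)).div_atTop
      tendsto_natCast_atTop_atTop
  have hlog : Tendsto (fun n : ℕ ↦ log (2 * n) / (2 * n)) atTop (𝓝 0) :=
    isLittleO_log_id_atTop.tendsto_div_nhds_zero.comp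
      (tendsto_natCast_atTop_atTop.const_mul_atTop two_pos)
  have hsum := (hstirling.add hlog).sub_const 1
  rw [add_zero, zero_sub] at hsum
  refine hsum.congr' ?_
  filter_upwards [eventually_ne_atTop 0] with n hn
  rw [Stirling.log_stirlingSeq_formula, log_div (Nat.cast_ne_zero.2 hn) (exp_ne_zero 1), log_exp]
  field_simp
  ring

end Sequences

section Kappa

lemma kappa_pos (n : ℕ) : 0 < kappa n :=
  div_pos (by positivity) (Gamma_pos_of_pos (by positivity))

lemma log_kappa (n : ℕ) : log (kappa n) = n / 2 * log π - log (Gamma (n / 2 + 1)) := by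
  rw [kappa, log_div (by positivity) (Gamma_pos_of_pos (by positivity)).ne', log_rpow pi_pos]

lemma log_kappa_sub_pred_add_half_log {n : ℕ} (hn : n ≠ 0) :
    log (kappa n) - log (kappa (n - 1)) + log n / 2 =
      log (2 * π) / 2 +
        (log (Gamma (n / 2 + 1 / 2)) - log (Gamma (n / 2)) - 1 / 2 * log (n / 2)) := by
  have hn' : (0 : ℝ) < n := by positivity
  have hpred : (n - 1 : ℝ) / 2 + 1 = n / 2 + 1 / 2 := by ring
  rw [log_kappa, log_kappa, Nat.cast_pred (Nat.pos_of_ne_zero hn), hpred,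
    log_Gamma_add_one (half_pos hn'), log_mul two_ne_zero pi_ne_zero,
    log_div hn'.ne' two_ne_zero]
  ring

lemma tendsto_log_kappa_sub_pred_add_half_log :
    Tendsto (fun n : ℕ ↦ log (kappa n) - log (kappa (n - 1)) + log n / 2) atTop
      (𝓝 (log (2 * π) / 2)) := by
  have hhalf : Tendsto (fun n : ℕ ↦ (n : ℝ) / 2) atTop atTop :=
    tendsto_natCast_atTop_atTop.atTop_div_const two_pos
  have hGamma := ((tendsto_log_Gamma_add_sub one_half_pos.le one_half_lt_one.le).comp
    hhalf).const_add (log (2 * π) / 2)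
  rw [add_zero] at hGamma
  refine hGamma.congr' ?_
  filter_upwards [eventually_ne_atTop 0] with n hn
  exact (log_kappa_sub_pred_add_half_log hn).symm

lemma tendsto_log_kappa_add_log_factorial_div :
    Tendsto (fun n : ℕ ↦ (log (kappa n) + log n ! / 2) / n) atTop (𝓝 (log (2 * π) / 2)) := by
  refine tendsto_div_natCast_of_tendsto_succ_sub
    ((tendsto_log_kappa_sub_pred_add_half_log.comp (tendsto_add_atTop_nat 1)).congr fun n ↦ ?_)
  have hfactorial : log ((n + 1)! : ℝ) = log (n + 1 : ℕ) + log n ! := by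
    rw [Nat.factorial_succ, Nat.cast_mul, log_mul (by positivity) (by positivity)]
  rw [Function.comp_apply, Nat.add_sub_cancel, hfactorial]
  ring

end Kappa

section ZeroCellVolume

/-- The expected volume `V_n` of the zero cell of a stationary isotropic Poisson hyperplane
tessellation of intensity `g` in `ℝⁿ`, given by its closed formula. -/
noncomputable def zeroCellVolume (n : ℕ) (g : ℝ) : ℝ :=
  n ! * kappa n * ((n * kappa n) / (2 * g * kappa (n - 1))) ^ n

lemma zeroCellVolume_nonneg (n : ℕ) {g : ℝ} (hg : 0 ≤ g) : 0 ≤ zeroCellVolume n g := by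
  have := kappa_pos n
  have := kappa_pos (n - 1)
  unfold zeroCellVolume
  positivity

lemma one_div_mul_log_zeroCellVolume {n : ℕ} (hn : n ≠ 0) {g : ℝ} (hg : g ≠ 0) :
    1 / (n : ℝ) * log (zeroCellVolume n g) =
      (log (kappa n) + log n ! / 2) / n + (log (kappa n) - log (kappa (n - 1)) + log n / 2) +
        (log n ! / n - log n) / 2 - log (g / n) - log 2 := by
  have hn' : (n : ℝ) ≠ 0 := Nat.cast_ne_zero.2 hn
  have hfactorial : (n ! : ℝ) ≠ 0 := by positivity
  have hkappa := (kappa_pos n).ne'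
  have hkappa_pred := (kappa_pos (n - 1)).ne'
  rw [zeroCellVolume, log_mul (by positivity) (by positivity), log_mul hfactorial hkappa, log_pow,
    log_div (by positivity) (by positivity), log_mul hn' hkappa,
    log_mul (by positivity) hkappa_pred, log_mul two_ne_zero hg, log_div hg hn']
  field_simp
  ring

lemma tendsto_one_div_mul_log_zeroCellVolume {γ : ℕ → ℝ} {ρ : ℝ} (hρ : ρ ≠ 0)
    (hγ : Tendsto (fun n : ℕ ↦ γ n / n) atTop (𝓝 ρ)) :
    Tendsto (fun n : ℕ ↦ 1 / (n : ℝ) * log (zeroCellVolume n (γ n))) atTop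
      (𝓝 (-log ρ + log π - 1 / 2)) := by
  have hsum := (((tendsto_log_kappa_add_log_factorial_div.add
    tendsto_log_kappa_sub_pred_add_half_log).add
    (tendsto_log_factorial_div_sub_log.div_const 2)).sub (hγ.log hρ)).sub_const (log 2)
  have hlimit : log (2 * π) / 2 + log (2 * π) / 2 + -1 / 2 - log ρ - log 2 =
      -log ρ + log π - 1 / 2 := by
    rw [log_mul two_ne_zero pi_ne_zero]
    ring
  rw [hlimit] at hsum
  refine hsum.congr' ?_
  filter_upwards [hγ.eventually_ne hρ] with n hratio
  obtain ⟨hγn, hn⟩ := div_ne_zero_iff.1 hratio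
  exact (one_div_mul_log_zeroCellVolume (Nat.cast_ne_zero.1 hn) hγn).symm

end ZeroCellVolume

lemma log_pi_div_sqrt_exp_one : log (π / √(exp 1)) = log π - 1 / 2 := by
  rw [log_div pi_ne_zero (by positivity), log_sqrt (exp_pos 1).le, log_exp]

/-- Asymptotics and threshold for the expected volume of the zero cell
`V_n = n! κ_n (n κ_n / (2 γ_n κ_{n-1}))^n` when `γ_n ∼ ρ n`. -/
theorem zero_cell_volume_threshold (ρ : ℝ) (hρ : 0 < ρ)
    (γ : ℕ → ℝ) (hγpos : ∀ n, 0 < γ n)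
    (hγ : Tendsto (fun n : ℕ => γ n / (n : ℝ)) atTop (nhds ρ))
    (V : ℕ → ℝ)
    (hV : ∀ n : ℕ, V n =
      (n.factorial : ℝ) * kappa n *
        (((n : ℝ) * kappa n) / (2 * γ n * kappa (n - 1))) ^ n) :
    Tendsto (fun n : ℕ => (1 / (n : ℝ)) * Real.log (V n)) atTop
      (nhds (-Real.log ρ + Real.log Real.pi - 1 / 2)) ∧
    (ρ > Real.pi / Real.sqrt (Real.exp 1) → Tendsto V atTop (nhds 0)) ∧
    (ρ < Real.pi / Real.sqrt (Real.exp 1) → Tendsto V atTop atTop) := by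
  obtain rfl : V = fun n ↦ zeroCellVolume n (γ n) := funext hV
  have hlim := tendsto_one_div_mul_log_zeroCellVolume hρ.ne' hγ
  refine ⟨hlim, fun hgt ↦ ?_, fun hlt ↦ ?_⟩
  · have hlog := log_lt_log (by positivity) hgt
    rw [log_pi_div_sqrt_exp_one] at hlog
    exact tendsto_zero_of_tendsto_one_div_mul_log_neg hlim (by linarith)
  · have hlog := log_lt_log hρ hlt
    rw [log_pi_div_sqrt_exp_one] at hlog
    exact tendsto_atTop_of_tendsto_one_div_mul_log_pos
      (.of_forall fun n ↦ zeroCellVolume_nonneg n (hγpos n).le) hlim (by linarith)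
end

section
/- Let n ≥ 1 and σ > 0, and let X be a random vector in ℝⁿ with the beta prime density f_{n,σ}. Then for every r > 0, the limit as m → ∞ of m·P(|X| ≥ m·r) equals 2σ·ω_n/(ω_{n+1}·r), where |X| is the Euclidean norm. -/
open Filter Real MeasureTheory

/-- `ω n`, the surface area of the unit sphere `S^{n-1}` in `ℝⁿ`. -/
noncomputable def omegaSphere (n : ℕ) : ℝ := (n : ℝ) * kappa n

/-- The beta prime density `f_{n,σ}` on `ℝⁿ`. -/
noncomputable def betaPrimePDF (n : ℕ) (σ : ℝ) (x : EuclideanSpace ℝ (Fin n)) : ℝ :=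
  (Real.Gamma (((n : ℝ) + 1) / 2) /
      (σ ^ n * Real.pi ^ ((n : ℝ) / 2) * Real.Gamma (1 / 2))) *
    (1 + ‖x‖ ^ 2 / σ ^ 2) ^ (-(((n : ℝ) + 1) / 2))

/-!
In polar coordinates `P(|X| ≥ R) = ω_n ∫_R^∞ y^(n-1) g(y) dy`, where `g(|x|)` is the density of `X`.
Since `y^(n+1) g(y) → c σ^(n+1)`, with `c` the normalizing constant, the integrand is asymptotic to
`c σ^(n+1) y⁻²`. After the substitution `y = R t`, dominated convergence on `(1, ∞)` then gives
`R · P(|X| ≥ R) → ω_n c σ^(n+1)`, and `c σ^(n+1) = 2σ/ω_{n+1}` by the functional equation of `Γ`.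
-/

section TailIntegral

variable {F : Type*} [NormedAddCommGroup F] [NormedSpace ℝ F]

lemma rpow_smul_integral_Ioi_eq (f : ℝ → F) (s : ℝ) {R : ℝ} (hR : 0 < R) :
    R ^ s • ∫ y in Set.Ioi R, f y =
      ∫ t in Set.Ioi 1, t ^ (-(s + 1)) • (R * t) ^ (s + 1) • f (R * t) := by
  have integrand_eq : ∀ t ∈ Set.Ioi (1 : ℝ),
      t ^ (-(s + 1)) • (R * t) ^ (s + 1) • f (R * t) = R ^ s • R • f (R * t) := by
    intro t ht
    have ht0 : 0 < t := zero_lt_one.trans ht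
    rw [smul_smul, smul_smul, mul_rpow hR.le ht0.le, rpow_neg ht0.le, rpow_add_one hR.ne']
    congr 1
    field_simp
  rw [setIntegral_congr_fun measurableSet_Ioi integrand_eq, integral_smul, integral_smul,
    integral_comp_mul_left_Ioi' f 1 hR, mul_one]

theorem tendsto_rpow_smul_integral_Ioi [CompleteSpace F] {f : ℝ → F} {L : F} {s : ℝ} (hs : 0 < s)
    (hf : AEStronglyMeasurable f)
    (hlim : Tendsto (fun y => y ^ (s + 1) • f y) atTop (nhds L)) :
    Tendsto (fun R => R ^ s • ∫ y in Set.Ioi R, f y) atTop (nhds (s⁻¹ • L)) := by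
  have limit_eq : ∫ t in Set.Ioi (1 : ℝ), t ^ (-(s + 1)) • L = s⁻¹ • L := by
    rw [integral_smul_const, integral_Ioi_rpow_of_lt (by linarith) one_pos, one_rpow, neg_add_rev,
      neg_add_cancel_comm, neg_div_neg_eq, one_div]
  have rescaled : (fun R => ∫ t in Set.Ioi 1, t ^ (-(s + 1)) • (R * t) ^ (s + 1) • f (R * t))
      =ᶠ[atTop] fun R => R ^ s • ∫ y in Set.Ioi R, f y := by
    filter_upwards [eventually_gt_atTop 0] with R hR
    exact (rpow_smul_integral_Ioi_eq f s hR).symm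
  refine Tendsto.congr' rescaled (limit_eq ▸ ?_)
  refine tendsto_integral_filter_of_dominated_convergence
    (fun t => t ^ (-(s + 1)) * (‖L‖ + 1)) ?_ ?_ ?_ ?_
  · filter_upwards [eventually_gt_atTop 0] with R hR
    have hfR : AEStronglyMeasurable fun t => f (R * t) :=
      hf.comp_quasiMeasurePreserving (Measure.quasiMeasurePreserving_smul volume hR.ne')
    exact (Measurable.aestronglyMeasurable (by fun_prop)).smul
      ((Measurable.aestronglyMeasurable (by fun_prop)).smul hfR.restrict)
  · have hbdd : ∀ᶠ y in atTop, ‖y ^ (s + 1) • f y‖ ≤ ‖L‖ + 1 :=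
      hlim.norm.eventually_le_const (lt_add_one _)
    obtain ⟨R₀, hR₀⟩ := eventually_atTop.1 hbdd
    filter_upwards [eventually_ge_atTop R₀, eventually_ge_atTop 0] with R hR hR_nonneg
    refine ae_restrict_of_forall_mem measurableSet_Ioi fun t (ht : 1 < t) => ?_
    rw [norm_smul, norm_of_nonneg (rpow_nonneg (by positivity) _)]
    gcongr
    exact hR₀ _ (hR.trans (le_mul_of_one_le_right hR_nonneg ht.le))
  · exact (integrableOn_Ioi_rpow_of_lt (by linarith) one_pos).mul_const _
  · refine ae_restrict_of_forall_mem measurableSet_Ioi fun t (ht : 1 < t) => ?_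
    exact (hlim.comp (tendsto_id.atTop_mul_const (zero_lt_one.trans ht))).const_smul _

end TailIntegral

section RadialDensity

open Module (finrank)

variable {E : Type*} [NormedAddCommGroup E] [NormedSpace ℝ E] [FiniteDimensional ℝ E]
  [MeasurableSpace E] [BorelSpace E] [Nontrivial E] (μ : Measure E) [μ.IsAddHaarMeasure]

lemma setIntegral_norm_ge_fun_norm {F : Type*} [NormedAddCommGroup F] [NormedSpace ℝ F]
    (f : ℝ → F) {R : ℝ} (hR : 0 ≤ R) :
    ∫ x in {x | R ≤ ‖x‖}, f ‖x‖ ∂μ =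
      finrank ℝ E • μ.real (Metric.ball 0 1) • ∫ y in Set.Ioi R, y ^ (finrank ℝ E - 1) • f y := by
  have hS : MeasurableSet {x : E | R ≤ ‖x‖} := measurableSet_le measurable_const measurable_norm
  calc ∫ x in {x | R ≤ ‖x‖}, f ‖x‖ ∂μ = ∫ x, (Set.Ici R).indicator f ‖x‖ ∂μ :=
        (integral_indicator hS).symm
    _ = finrank ℝ E • μ.real (Metric.ball 0 1) •
          ∫ y in Set.Ici 0, (Set.Ici R).indicator (fun y => y ^ (finrank ℝ E - 1) • f y) y := by
        simp only [integral_fun_norm_addHaar, Set.indicator_smul, integral_Ici_eq_integral_Ioi]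
    _ = _ := by
        rw [setIntegral_indicator measurableSet_Ici,
          Set.inter_eq_right.2 (Set.Ici_subset_Ici.2 hR), integral_Ici_eq_integral_Ioi]

lemma measureReal_withDensity_norm_ge {f : ℝ → ℝ} (hf : Measurable f) (hf0 : 0 ≤ f) {R : ℝ}
    (hR : 0 ≤ R) :
    (μ.withDensity fun x => ENNReal.ofReal (f ‖x‖)).real {x | R ≤ ‖x‖} =
      finrank ℝ E * μ.real (Metric.ball 0 1) *
        ∫ y in Set.Ioi R, y ^ (finrank ℝ E - 1) * f y := by
  rw [Measure.real, withDensity_apply _ (measurableSet_le measurable_const measurable_norm),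
    ← integral_eq_lintegral_of_nonneg_ae (f := fun x => f ‖x‖) (ae_of_all _ fun _ => hf0 _)
      (hf.comp measurable_norm).aestronglyMeasurable,
    setIntegral_norm_ge_fun_norm μ f hR]
  simp only [nsmul_eq_mul, smul_eq_mul, mul_assoc]

theorem tendsto_rpow_mul_measureReal_withDensity_norm_ge {f : ℝ → ℝ} (hf : Measurable f)
    (hf0 : 0 ≤ f) {s L : ℝ} (hs : 0 < s)
    (hlim : Tendsto (fun y => y ^ (finrank ℝ E + s) * f y) atTop (nhds L)) :
    Tendsto
      (fun R => R ^ s * (μ.withDensity fun x => ENNReal.ofReal (f ‖x‖)).real {x | R ≤ ‖x‖})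
      atTop (nhds (finrank ℝ E * μ.real (Metric.ball 0 1) * (s⁻¹ * L))) := by
  have hdim : 1 ≤ finrank ℝ E := Module.finrank_pos
  have radial_lim : Tendsto (fun y : ℝ => y ^ (s + 1) • (y ^ (finrank ℝ E - 1) * f y)) atTop
      (nhds L) := by
    refine hlim.congr' ?_
    filter_upwards [eventually_gt_atTop 0] with y hy
    rw [smul_eq_mul, ← mul_assoc, ← rpow_add_natCast hy.ne', Nat.cast_sub hdim]
    ring_nf
  have integral_lim := tendsto_rpow_smul_integral_Ioi hs (by fun_prop) radial_lim
  refine (integral_lim.const_mul _).congr' ?_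
  filter_upwards [eventually_ge_atTop 0] with R hR
  rw [measureReal_withDensity_norm_ge μ hf hf0 hR, smul_eq_mul, mul_left_comm]

end RadialDensity

lemma tendsto_rpow_mul_one_add_sq_div_sq_rpow {σ : ℝ} (hσ : 0 < σ) (p : ℝ) :
    Tendsto (fun y : ℝ => y ^ p * (1 + y ^ 2 / σ ^ 2) ^ (-(p / 2))) atTop (nhds (σ ^ p)) := by
  have inv_sq_rpow : ∀ {a : ℝ}, 0 < a → (a⁻¹ ^ 2) ^ (-(p / 2)) = a ^ p := by
    intro a ha
    rw [← rpow_natCast, ← rpow_mul (inv_nonneg.2 ha.le), inv_rpow ha.le, ← rpow_neg ha.le]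
    congr 1
    push_cast
    ring
  have base_lim : Tendsto (fun y : ℝ => y⁻¹ ^ 2 + σ⁻¹ ^ 2) atTop (nhds (σ⁻¹ ^ 2)) := by
    simpa only [zero_pow two_ne_zero, zero_add] using
      (tendsto_inv_atTop_zero.pow 2).add_const (σ⁻¹ ^ 2)
  refine (inv_sq_rpow hσ ▸ base_lim.rpow_const (.inl (by positivity))).congr' ?_
  filter_upwards [eventually_gt_atTop 0] with y hy
  rw [← inv_sq_rpow hy, ← mul_rpow (by positivity) (by positivity)]
  congr 1
  field_simp

lemma volume_real_unitBall_eq_kappa (n : ℕ) [NeZero n] :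
    volume.real (Metric.ball (0 : EuclideanSpace ℝ (Fin n)) 1) = kappa n := by
  rw [Measure.real, EuclideanSpace.volume_ball, Fintype.card_fin, ENNReal.ofReal_one, one_pow,
    one_mul, ENNReal.toReal_ofReal (by positivity), kappa, rpow_div_two_eq_sqrt _ pi_pos.le,
    rpow_natCast]

/-- The normalizing constant `c_{n,σ}` of the beta prime density. -/
noncomputable def betaPrimeConst (n : ℕ) (σ : ℝ) : ℝ :=
  Gamma (((n : ℝ) + 1) / 2) / (σ ^ n * π ^ ((n : ℝ) / 2) * Gamma (1 / 2))

/-- The radial profile of the beta prime density: the function of `|x|` through which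
`f_{n,σ}(x)` factors. -/
noncomputable def betaPrimeProfile (n : ℕ) (σ y : ℝ) : ℝ :=
  betaPrimeConst n σ * (1 + y ^ 2 / σ ^ 2) ^ (-(((n : ℝ) + 1) / 2))

lemma betaPrimePDF_eq_profile_norm (n : ℕ) (σ : ℝ) (x : EuclideanSpace ℝ (Fin n)) :
    betaPrimePDF n σ x = betaPrimeProfile n σ ‖x‖ := rfl

lemma measurable_betaPrimeProfile (n : ℕ) (σ : ℝ) : Measurable (betaPrimeProfile n σ) := by
  unfold betaPrimeProfile
  fun_prop

lemma betaPrimeProfile_nonneg (n : ℕ) {σ : ℝ} (hσ : 0 ≤ σ) : 0 ≤ betaPrimeProfile n σ := by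
  intro y
  simp only [betaPrimeProfile, betaPrimeConst, Pi.zero_apply]
  positivity

lemma betaPrimeConst_mul_pow_succ (n : ℕ) {σ : ℝ} (hσ : σ ≠ 0) :
    betaPrimeConst n σ * σ ^ (n + 1) = 2 * σ / omegaSphere (n + 1) := by
  have hΓ_succ : Gamma (((n : ℝ) + 1) / 2 + 1) = ((n : ℝ) + 1) / 2 * Gamma (((n : ℝ) + 1) / 2) :=
    Gamma_add_one (by positivity)
  have hπ_pow : π ^ (((n : ℝ) + 1) / 2) = π ^ ((n : ℝ) / 2) * √π := by
    rw [sqrt_eq_rpow, ← rpow_add pi_pos, add_div]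
  simp only [betaPrimeConst, omegaSphere, kappa, Nat.cast_add_one]
  rw [hΓ_succ, hπ_pow, Gamma_one_half_eq, pow_succ]
  field_simp

lemma tendsto_rpow_mul_betaPrimeProfile (n : ℕ) {σ : ℝ} (hσ : 0 < σ) :
    Tendsto (fun y => y ^ ((n : ℝ) + 1) * betaPrimeProfile n σ y) atTop
      (nhds (2 * σ / omegaSphere (n + 1))) := by
  have hlim := (tendsto_rpow_mul_one_add_sq_div_sq_rpow hσ ((n : ℝ) + 1)).const_mul
    (betaPrimeConst n σ)
  rw [← Nat.cast_add_one, rpow_natCast, betaPrimeConst_mul_pow_succ n hσ.ne'] at hlim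
  simpa only [betaPrimeProfile, mul_left_comm, Nat.cast_add_one] using hlim

theorem tendsto_mul_measureReal_betaPrime_norm_ge (n : ℕ) [NeZero n] {σ : ℝ} (hσ : 0 < σ) :
    Tendsto (fun R => R * (volume.withDensity fun x => ENNReal.ofReal (betaPrimePDF n σ x)).real
        {x | R ≤ ‖x‖}) atTop (nhds (omegaSphere n * (2 * σ / omegaSphere (n + 1)))) := by
  have hlim := tendsto_rpow_mul_measureReal_withDensity_norm_ge
    (E := EuclideanSpace ℝ (Fin n)) volume (s := 1) (measurable_betaPrimeProfile n σ)
    (betaPrimeProfile_nonneg n hσ.le) one_pos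
    (by simpa only [finrank_euclideanSpace_fin] using tendsto_rpow_mul_betaPrimeProfile n hσ)
  simpa only [omegaSphere, rpow_one, inv_one, one_mul, finrank_euclideanSpace_fin,
    volume_real_unitBall_eq_kappa, ← betaPrimePDF_eq_profile_norm] using hlim

theorem betaPrime_norm_tail_general (n : ℕ) (hn : 1 ≤ n) (σ : ℝ) (hσ : 0 < σ)
    {Ω : Type*} [MeasurableSpace Ω] (P : Measure Ω)
    (X : Ω → EuclideanSpace ℝ (Fin n)) (hX : AEMeasurable X P)
    (hlaw : P.map X = volume.withDensity fun x => ENNReal.ofReal (betaPrimePDF n σ x))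
    (r : ℝ) (hr : 0 < r) :
    Tendsto (fun t : ℝ => t * (P {ω | t * r ≤ ‖X ω‖}).toReal) atTop
      (nhds (2 * σ * omegaSphere n / (omegaSphere (n + 1) * r))) := by
  have : NeZero n := ⟨Nat.one_le_iff_ne_zero.1 hn⟩
  have tail_eq (R : ℝ) : (P.map X).real {x | R ≤ ‖x‖} = (P {ω | R ≤ ‖X ω‖}).toReal :=
    map_measureReal_apply_of_aemeasurable hX (measurableSet_le measurable_const measurable_norm)
  have tail_lim := tendsto_mul_measureReal_betaPrime_norm_ge n hσ
  simp only [← hlaw, tail_eq] at tail_lim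
  convert (tail_lim.comp (tendsto_id.atTop_mul_const hr)).div_const r using 2
  · simp only [Function.comp_apply, id]
    field_simp
  · ring

/-- Heavy-tail behaviour of the norm of a beta prime random vector:
`m · P(|X| ≥ m r) → 2σ ω_n/(ω_{n+1} r)` as `m → ∞`. -/
theorem betaPrime_norm_tail (n : ℕ) (hn : 1 ≤ n) (σ : ℝ) (hσ : 0 < σ)
    {Ω : Type*} [MeasurableSpace Ω] (P : Measure Ω) [IsProbabilityMeasure P]
    (X : Ω → EuclideanSpace ℝ (Fin n)) (hX : Measurable X)
    (hlaw : P.map X = volume.withDensity fun x => ENNReal.ofReal (betaPrimePDF n σ x))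
    (r : ℝ) (hr : 0 < r) :
    Tendsto (fun m : ℕ => (m : ℝ) * (P {ω | (m : ℝ) * r ≤ ‖X ω‖}).toReal) atTop
      (nhds (2 * σ * omegaSphere n / (omegaSphere (n + 1) * r))) :=
  (betaPrime_norm_tail_general n hn σ hσ P X hX.aemeasurable hlaw r hr).comp
    tendsto_natCast_atTop_atTop
end

section
/- Let (b_n) be a sequence of positive reals with b_n/n → b as n → ∞. If b > 1, then (1/n)·ln Γ_u(n, b_n) → ln b − b + 1 as n → ∞. If 0 < b < 1, then (1/n)·ln Γ_ℓ(n, b_n) → ln b − b + 1 as n → ∞. -/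
/-!
Write `x` for the shape parameter and `φ β = log β - β + 1`. The function `t ^ x * exp (-t)` peaks
at `t = x`, and its value at `c` is `exp (x * φ (c / x))` times the peak value, which by Stirling is
`Γ(x)` up to a factor `exp (o(x))`.

Upper bound (Chernoff): if `t - c` and `c - x` have the same sign on the domain of integration, then
`exp (-t) ≤ exp (x - c) * exp (-(x / c) * t)` there, and the integral of
`t ^ (x - 1) * exp (-(x / c) * t)` over all of `(0, ∞)` is `(c / x) ^ x * Γ(x)`. Choosing
`c = max R x` for the upper tail and `c = min R x` for the lower tail makes the sign condition
automatic.

Lower bound: shrink the tail to the one starting at `c` and freeze one factor of the integrand at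
`t = c`. This costs only a factor `c` or `x`, which is negligible on the exponential scale.
-/

open Filter Real

/-- The upper regularized incomplete gamma function `Γ_u(x, R)`. -/
noncomputable def gammaU (x R : ℝ) : ℝ :=
  (∫ t in Set.Ioi R, t ^ (x - 1) * Real.exp (-t)) / Real.Gamma x

/-- The lower regularized incomplete gamma function `Γ_ℓ(x, R)`. -/
noncomputable def gammaL (x R : ℝ) : ℝ :=
  (∫ t in Set.Ioc (0 : ℝ) R, t ^ (x - 1) * Real.exp (-t)) / Real.Gamma x

open MeasureTheory Set
open scoped Topology Nat

/-- The exponential rate of the gamma tails: minus the Cramér rate function of the standard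
exponential law. It is meaningful for `β > 0` only. -/
noncomputable def gammaRate (β : ℝ) : ℝ :=
  log β - β + 1

lemma continuousAt_gammaRate {β : ℝ} (hβ : β ≠ 0) : ContinuousAt gammaRate β :=
  ((continuousAt_log hβ).sub continuousAt_id).add continuousAt_const

lemma mul_gammaRate_div {x c : ℝ} (hx : 0 < x) (hc : 0 < c) :
    x * gammaRate (c / x) = x * log c - c - (x * log x - x) := by
  rw [gammaRate, log_div hc.ne' hx.ne']
  field_simp
  ring

lemma exp_mul_gammaRate_div {x c : ℝ} (hx : 0 < x) (hc : 0 < c) :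
    exp (x * gammaRate (c / x)) = exp (x - c) * (c / x) ^ x := by
  rw [rpow_def_of_pos (div_pos hc hx), ← exp_add, mul_gammaRate_div hx hc, log_div hc.ne' hx.ne']
  ring_nf

lemma integrableOn_rpow_mul_exp_neg_mul {a r : ℝ} (ha : 0 < a) (hr : 0 < r) :
    IntegrableOn (fun t : ℝ ↦ t ^ (a - 1) * exp (-(r * t))) (Ioi 0) := by
  simpa using integrableOn_rpow_mul_exp_neg_mul_rpow (s := a - 1) (by linarith) one_pos hr

lemma integrableOn_rpow_mul_exp_neg {a : ℝ} (ha : 0 < a) :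
    IntegrableOn (fun t : ℝ ↦ t ^ (a - 1) * exp (-t)) (Ioi 0) := by
  simpa using integrableOn_rpow_mul_exp_neg_mul ha one_pos

lemma ae_nonneg_rpow_mul_exp {s : Set ℝ} (hs : MeasurableSet s) (hs0 : s ⊆ Ioi 0) (a : ℝ)
    (f : ℝ → ℝ) : 0 ≤ᵐ[volume.restrict s] fun t ↦ t ^ a * exp (f t) := by
  filter_upwards [ae_restrict_mem hs] with t ht
  exact mul_nonneg (rpow_nonneg (le_of_lt (hs0 ht)) a) (exp_pos _).le

lemma antitoneOn_gammaU {x : ℝ} (hx : 0 < x) : AntitoneOn (gammaU x) (Ici 0) := by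
  intro R (hR : 0 ≤ R) R' _ hRR'
  refine div_le_div_of_nonneg_right ?_ (Gamma_pos_of_pos hx).le
  have hR0 : Ioi R ⊆ Ioi 0 := Ioi_subset_Ioi hR
  exact setIntegral_mono_set ((integrableOn_rpow_mul_exp_neg hx).mono_set hR0)
    (ae_nonneg_rpow_mul_exp measurableSet_Ioi hR0 _ _) (Ioi_subset_Ioi hRR').eventuallyLE

lemma monotone_gammaL {x : ℝ} (hx : 0 < x) : Monotone (gammaL x) := by
  intro R R' hRR'
  refine div_le_div_of_nonneg_right ?_ (Gamma_pos_of_pos hx).le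
  exact setIntegral_mono_set ((integrableOn_rpow_mul_exp_neg hx).mono_set Ioc_subset_Ioi_self)
    (ae_nonneg_rpow_mul_exp measurableSet_Ioc Ioc_subset_Ioi_self _ _)
    (Ioc_subset_Ioc_right hRR').eventuallyLE

lemma exp_neg_le_exp_mul_exp_neg {x c t : ℝ} (hc : 0 < c) (h : 0 ≤ (t - c) * (c - x)) :
    exp (-t) ≤ exp (x - c) * exp (-(x / c * t)) := by
  rw [← exp_add, exp_le_exp, ← sub_nonneg]
  calc 0 ≤ (t - c) * (c - x) / c := div_nonneg h hc.le
    _ = x - c + -(x / c * t) - -t := by field_simp; ring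

lemma setIntegral_rpow_mul_exp_neg_div_Gamma_le {x c : ℝ} (hx : 0 < x) (hc : 0 < c) {s : Set ℝ}
    (hs : MeasurableSet s) (hs0 : s ⊆ Ioi 0) (hsign : ∀ t ∈ s, 0 ≤ (t - c) * (c - x)) :
    (∫ t in s, t ^ (x - 1) * exp (-t)) / Gamma x ≤ exp (x * gammaRate (c / x)) := by
  have hr : 0 < x / c := div_pos hx hc
  have hint := (integrableOn_rpow_mul_exp_neg_mul hx hr).const_mul (exp (x - c))
  rw [div_le_iff₀ (Gamma_pos_of_pos hx), exp_mul_gammaRate_div hx hc]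
  calc ∫ t in s, t ^ (x - 1) * exp (-t)
      ≤ ∫ t in s, exp (x - c) * (t ^ (x - 1) * exp (-(x / c * t))) := by
        refine setIntegral_mono_on ((integrableOn_rpow_mul_exp_neg hx).mono_set hs0)
          (IntegrableOn.mono_set hint hs0) hs fun t ht ↦ ?_
        rw [mul_left_comm]
        exact mul_le_mul_of_nonneg_left (exp_neg_le_exp_mul_exp_neg hc (hsign t ht))
          (rpow_nonneg (le_of_lt (hs0 ht)) _)
    _ ≤ ∫ t in Ioi 0, exp (x - c) * (t ^ (x - 1) * exp (-(x / c * t))) :=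
        setIntegral_mono_set hint ((ae_nonneg_rpow_mul_exp measurableSet_Ioi subset_rfl _ _).mono
          fun _ ht ↦ mul_nonneg (exp_pos _).le ht) hs0.eventuallyLE
    _ = exp (x - c) * (c / x) ^ x * Gamma x := by
        rw [integral_const_mul, integral_rpow_mul_exp_neg_mul_Ioi hx hr, one_div_div, mul_assoc]

lemma gammaU_le_exp {x R : ℝ} (hx : 0 < x) (hR : 0 ≤ R) :
    gammaU x R ≤ exp (x * gammaRate (max R x / x)) := by
  refine setIntegral_rpow_mul_exp_neg_div_Gamma_le hx (lt_max_of_lt_right hx) measurableSet_Ioi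
    (Ioi_subset_Ioi hR) fun t (ht : R < t) ↦ ?_
  rcases le_total x R with hxR | hRx
  · rw [max_eq_left hxR]
    exact mul_nonneg (sub_nonneg.2 ht.le) (sub_nonneg.2 hxR)
  · simp [max_eq_right hRx]

lemma gammaL_le_exp {x R : ℝ} (hx : 0 < x) (hR : 0 < R) :
    gammaL x R ≤ exp (x * gammaRate (min R x / x)) := by
  refine setIntegral_rpow_mul_exp_neg_div_Gamma_le hx (lt_min hR hx) measurableSet_Ioc
    Ioc_subset_Ioi_self fun t ht ↦ ?_
  rcases le_total x R with hxR | hRx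
  · simp [min_eq_right hxR]
  · rw [min_eq_left hRx]
    exact mul_nonneg_of_nonpos_of_nonpos (sub_nonpos.2 ht.2) (sub_nonpos.2 hRx)

lemma log_factorial_le_stirling {n : ℕ} (hn : n ≠ 0) :
    log n ! ≤ n * log n - n + log n / 2 + 1 := by
  obtain ⟨m, rfl⟩ := Nat.exists_eq_succ_of_ne_zero hn
  have hm : ((m + 1 : ℕ) : ℝ) ≠ 0 := Nat.cast_ne_zero.2 hn
  have hanti : log (Stirling.stirlingSeq (m + 1)) ≤ log (Stirling.stirlingSeq 1) :=
    Stirling.log_stirlingSeq'_antitone (Nat.zero_le m)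
  rw [Stirling.log_stirlingSeq_formula, Stirling.log_stirlingSeq_formula,
    log_div hm (exp_ne_zero 1), log_mul two_ne_zero hm] at hanti
  simp only [Nat.factorial_one, Nat.cast_one, log_one, mul_one, one_div, log_inv, log_exp] at hanti
  linarith

lemma log_Gamma_le_stirling {x : ℝ} (hx : 2 ≤ x) :
    log (Gamma x) ≤ x * log x - x + log x / 2 + 2 := by
  have hfloor : 2 ≤ ⌊x⌋₊ := Nat.le_floor hx
  have hfloor_pos : (0 : ℝ) < ⌊x⌋₊ := by positivity
  have hfloor_le : (⌊x⌋₊ : ℝ) ≤ x := Nat.floor_le (by linarith)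
  have hlt_floor : x < ⌊x⌋₊ + 1 := Nat.lt_floor_add_one x
  have hlog : log ⌊x⌋₊ ≤ log x := log_le_log hfloor_pos hfloor_le
  have hGamma : Gamma x ≤ ⌊x⌋₊ ! := by
    rw [← Gamma_nat_eq_factorial]
    exact Gamma_strictMonoOn_Ici.monotoneOn hx (hx.trans hlt_floor.le) hlt_floor.le
  have hmul : ⌊x⌋₊ * log ⌊x⌋₊ ≤ x * log x :=
    mul_le_mul hfloor_le hlog (log_natCast_nonneg _) (by linarith)
  calc log (Gamma x) ≤ log ⌊x⌋₊ ! := log_le_log (Gamma_pos_of_pos (by linarith)) hGamma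
    _ ≤ ⌊x⌋₊ * log ⌊x⌋₊ - ⌊x⌋₊ + log ⌊x⌋₊ / 2 + 1 := log_factorial_le_stirling (by omega)
    _ ≤ x * log x - x + log x / 2 + 2 := by linarith

lemma exp_le_rpow_mul_exp_neg_div_Gamma_div {x c d : ℝ} (hx : 2 ≤ x) (hc : 0 < c) (hd : 0 < d) :
    exp (x * gammaRate (c / x) - (log d + log x / 2 + 2)) ≤ c ^ x * exp (-c) / Gamma x / d := by
  have hx0 : 0 < x := by linarith
  have hGamma : 0 < Gamma x := Gamma_pos_of_pos hx0
  have hnum : 0 < c ^ x * exp (-c) := by positivity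
  rw [← le_log_iff_exp_le (by positivity), log_div (by positivity) hd.ne',
    log_div hnum.ne' hGamma.ne', log_mul (by positivity) (exp_ne_zero _), log_rpow hc, log_exp,
    mul_gammaRate_div hx0 hc]
  linarith [log_Gamma_le_stirling hx]

lemma rpow_mul_exp_neg_div_Gamma_div_le_gammaU {x c : ℝ} (hx : 1 ≤ x) (hc : 0 < c) :
    c ^ x * exp (-c) / Gamma x / c ≤ gammaU x c := by
  have hx0 : 0 < x := by linarith
  rw [div_right_comm, mul_div_right_comm, ← rpow_sub_one hc.ne']
  refine div_le_div_of_nonneg_right ?_ (Gamma_pos_of_pos hx0).le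
  rw [← integral_exp_neg_Ioi c, ← integral_const_mul]
  refine setIntegral_mono_on ((integrableOn_exp_neg_Ioi c).const_mul _)
    ((integrableOn_rpow_mul_exp_neg hx0).mono_set (Ioi_subset_Ioi hc.le)) measurableSet_Ioi
    fun t (ht : c < t) ↦ ?_
  exact mul_le_mul_of_nonneg_right (rpow_le_rpow hc.le ht.le (sub_nonneg.2 hx)) (exp_pos _).le

lemma rpow_mul_exp_neg_div_Gamma_div_le_gammaL {x c : ℝ} (hx : 0 < x) (hc : 0 < c) :
    c ^ x * exp (-c) / Gamma x / x ≤ gammaL x c := by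
  have hint : IntervalIntegrable (fun t : ℝ ↦ t ^ (x - 1)) volume 0 c :=
    intervalIntegral.intervalIntegrable_rpow' (by linarith)
  have hpow : ∫ t in Ioc 0 c, t ^ (x - 1) = c ^ x / x := by
    rw [← intervalIntegral.integral_of_le hc.le, integral_rpow (Or.inl (by linarith)),
      sub_add_cancel, zero_rpow hx.ne', sub_zero]
  rw [div_right_comm, mul_div_right_comm, ← hpow, ← integral_mul_const]
  refine div_le_div_of_nonneg_right ?_ (Gamma_pos_of_pos hx).le
  refine setIntegral_mono_on (hint.1.mul_const _)
    ((integrableOn_rpow_mul_exp_neg hx).mono_set Ioc_subset_Ioi_self) measurableSet_Ioc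
    fun t ⟨ht0, htc⟩ ↦ ?_
  gcongr

lemma exp_le_gammaU {x R : ℝ} (hx : 2 ≤ x) (hR : 0 ≤ R) :
    exp (x * gammaRate (max R x / x) - (log (max R x) + log x / 2 + 2)) ≤ gammaU x R := by
  have hx0 : 0 < x := by linarith
  have hmax : 0 < max R x := lt_max_of_lt_right hx0
  calc _ ≤ max R x ^ x * exp (-max R x) / Gamma x / max R x :=
        exp_le_rpow_mul_exp_neg_div_Gamma_div hx hmax hmax
    _ ≤ gammaU x (max R x) := rpow_mul_exp_neg_div_Gamma_div_le_gammaU (by linarith) hmax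
    _ ≤ gammaU x R := antitoneOn_gammaU hx0 hR hmax.le (le_max_left R x)

lemma exp_le_gammaL {x R : ℝ} (hx : 2 ≤ x) (hR : 0 < R) :
    exp (x * gammaRate (min R x / x) - (log x + log x / 2 + 2)) ≤ gammaL x R := by
  have hx0 : 0 < x := by linarith
  have hmin : 0 < min R x := lt_min hR hx0
  calc _ ≤ min R x ^ x * exp (-min R x) / Gamma x / x :=
        exp_le_rpow_mul_exp_neg_div_Gamma_div hx hmin hx0
    _ ≤ gammaL x (min R x) := rpow_mul_exp_neg_div_Gamma_div_le_gammaL hx0 hmin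
    _ ≤ gammaL x R := monotone_gammaL hx0 (min_le_left R x)

section Limits

variable {ι : Type*} {l : Filter ι} {x : ι → ℝ}

lemma tendsto_one_div_mul_log_of_exp_bounds {f e G : ι → ℝ} {a : ℝ} (hx : ∀ᶠ i in l, 0 < x i)
    (hf : Tendsto f l (𝓝 a)) (he : Tendsto (fun i ↦ e i / x i) l (𝓝 0))
    (hlower : ∀ᶠ i in l, exp (x i * f i - e i) ≤ G i)
    (hupper : ∀ᶠ i in l, G i ≤ exp (x i * f i)) :
    Tendsto (fun i ↦ 1 / x i * log (G i)) l (𝓝 a) := by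
  have hfe : Tendsto (fun i ↦ f i - e i / x i) l (𝓝 a) := by simpa using hf.sub he
  refine tendsto_of_tendsto_of_tendsto_of_le_of_le' hfe hf ?_ ?_
  · filter_upwards [hx, hlower] with i hxi hi
    rw [one_div_mul_eq_div, le_div_iff₀ hxi, sub_mul, div_mul_cancel₀ _ hxi.ne', mul_comm]
    exact (le_log_iff_exp_le ((exp_pos _).trans_le hi)).2 hi
  · filter_upwards [hx, hlower, hupper] with i hxi hi hi'
    rw [one_div_mul_eq_div, div_le_iff₀' hxi]
    exact (log_le_iff_le_exp ((exp_pos _).trans_le hi)).2 hi'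

lemma tendsto_log_div_self_of_tendsto_atTop (hx : Tendsto x l atTop) :
    Tendsto (fun i ↦ log (x i) / x i) l (𝓝 0) :=
  isLittleO_log_id_atTop.tendsto_div_nhds_zero.comp hx

lemma tendsto_log_div_of_tendsto_div {c : ι → ℝ} {β : ℝ} (hx : Tendsto x l atTop) (hβ : β ≠ 0)
    (hc : Tendsto (fun i ↦ c i / x i) l (𝓝 β)) :
    Tendsto (fun i ↦ log (c i) / x i) l (𝓝 0) := by
  have hsum := ((hc.log hβ).div_atTop hx).add (tendsto_log_div_self_of_tendsto_atTop hx)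
  rw [add_zero] at hsum
  refine hsum.congr' ?_
  filter_upwards [hx.eventually_ne_atTop 0, hc.eventually_ne hβ] with i hxi hci
  rw [log_div (div_ne_zero_iff.1 hci).1 hxi, ← add_div, sub_add_cancel]

lemma tendsto_log_add_log_div_two_add_two_div {d : ι → ℝ} (hx : Tendsto x l atTop)
    (hd : Tendsto (fun i ↦ log (d i) / x i) l (𝓝 0)) :
    Tendsto (fun i ↦ (log (d i) + log (x i) / 2 + 2) / x i) l (𝓝 0) := by
  have hsum := (hd.add ((tendsto_log_div_self_of_tendsto_atTop hx).div_const 2)).add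
    (hx.const_div_atTop 2)
  simp only [zero_div, add_zero] at hsum
  exact hsum.congr fun i ↦ by ring

lemma tendsto_log_gammaU {R : ι → ℝ} {b : ℝ} (hx : Tendsto x l atTop)
    (hR : ∀ᶠ i in l, 0 ≤ R i) (hb : Tendsto (fun i ↦ R i / x i) l (𝓝 b)) :
    Tendsto (fun i ↦ 1 / x i * log (gammaU (x i) (R i))) l (𝓝 (gammaRate (max b 1))) := by
  have hx0 : ∀ᶠ i in l, 0 < x i := hx.eventually_gt_atTop 0
  have hmax0 : max b 1 ≠ 0 := (lt_max_of_lt_right one_pos).ne'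
  have hmax : Tendsto (fun i ↦ max (R i) (x i) / x i) l (𝓝 (max b 1)) := by
    refine (hb.max tendsto_const_nhds).congr' ?_
    filter_upwards [hx0] with i hxi
    rw [← max_div_div_right hxi.le, div_self hxi.ne']
  refine tendsto_one_div_mul_log_of_exp_bounds hx0
    ((continuousAt_gammaRate hmax0).tendsto.comp hmax)
    (tendsto_log_add_log_div_two_add_two_div hx (tendsto_log_div_of_tendsto_div hx hmax0 hmax))
    ?_ ?_
  · filter_upwards [hx.eventually_ge_atTop 2, hR] with i hxi hRi using exp_le_gammaU hxi hRi
  · filter_upwards [hx0, hR] with i hxi hRi using gammaU_le_exp hxi hRi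

lemma tendsto_log_gammaL {R : ι → ℝ} {b : ℝ} (hx : Tendsto x l atTop) (hb0 : 0 < b)
    (hb : Tendsto (fun i ↦ R i / x i) l (𝓝 b)) :
    Tendsto (fun i ↦ 1 / x i * log (gammaL (x i) (R i))) l (𝓝 (gammaRate (min b 1))) := by
  have hx0 : ∀ᶠ i in l, 0 < x i := hx.eventually_gt_atTop 0
  have hR : ∀ᶠ i in l, 0 < R i := by
    filter_upwards [hx0, hb.eventually_const_lt hb0] with i hxi hRi
    exact (div_pos_iff_of_pos_right hxi).1 hRi
  have hmin : Tendsto (fun i ↦ min (R i) (x i) / x i) l (𝓝 (min b 1)) := by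
    refine (hb.min tendsto_const_nhds).congr' ?_
    filter_upwards [hx0] with i hxi
    rw [← min_div_div_right hxi.le, div_self hxi.ne']
  refine tendsto_one_div_mul_log_of_exp_bounds hx0
    ((continuousAt_gammaRate (lt_min hb0 one_pos).ne').tendsto.comp hmin)
    (tendsto_log_add_log_div_two_add_two_div hx (tendsto_log_div_self_of_tendsto_atTop hx)) ?_ ?_
  · filter_upwards [hx.eventually_ge_atTop 2, hR] with i hxi hRi using exp_le_gammaL hxi hRi
  · filter_upwards [hx0, hR] with i hxi hRi using gammaL_le_exp hxi hRi

theorem incompleteGamma_laplace_asymptotics_general {R : ι → ℝ} {b : ℝ} (hx : Tendsto x l atTop)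
    (hb : Tendsto (fun i ↦ R i / x i) l (𝓝 b)) :
    ((∀ᶠ i in l, 0 ≤ R i) →
      Tendsto (fun i ↦ 1 / x i * log (gammaU (x i) (R i))) l (𝓝 (gammaRate (max b 1)))) ∧
    (0 < b →
      Tendsto (fun i ↦ 1 / x i * log (gammaL (x i) (R i))) l (𝓝 (gammaRate (min b 1)))) :=
  ⟨fun hR ↦ tendsto_log_gammaU hx hR hb, fun hb0 ↦ tendsto_log_gammaL hx hb0 hb⟩

end Limits

/-- Laplace-method asymptotics of the regularized incomplete gamma functions:
if `b_n / n → b` then `(1/n) ln Γ_u(n, b_n) → ln b − b + 1` when `b > 1`, and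
`(1/n) ln Γ_ℓ(n, b_n) → ln b − b + 1` when `0 < b < 1`. -/
theorem incompleteGamma_laplace_asymptotics (b : ℝ) (bSeq : ℕ → ℝ)
    (hbpos : ∀ n, 0 < bSeq n)
    (hb : Tendsto (fun n : ℕ => bSeq n / (n : ℝ)) atTop (nhds b)) :
    (1 < b →
      Tendsto (fun n : ℕ => (1 / (n : ℝ)) * Real.log (gammaU n (bSeq n))) atTop
        (nhds (Real.log b - b + 1))) ∧
    (0 < b → b < 1 →
      Tendsto (fun n : ℕ => (1 / (n : ℝ)) * Real.log (gammaL n (bSeq n))) atTop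
        (nhds (Real.log b - b + 1))) := by
  obtain ⟨hU, hL⟩ := incompleteGamma_laplace_asymptotics_general tendsto_natCast_atTop_atTop hb
  exact ⟨fun hb1 ↦ max_eq_left hb1.le ▸ hU (Eventually.of_forall fun n ↦ (hbpos n).le),
    fun hb0 hb1 ↦ min_eq_left hb1.le ▸ hL hb0⟩
end

section
/- Fix an integer n ≥ 1, σ > 0 and r > 0. Then the limit as m → ∞ of m^n · ∫_{−m/r}^{m/r} (1 + t²/σ²)^(−(n+1)/2) · ((σπ)^(−1) ∫_{−∞}^{t} (1 + s²/σ²)^(−1) ds)^(m−n) dt equals σ·πⁿ·Γ(n)·Γ_u(n, σr/π). -/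
/-!
The base of the power is the Cauchy distribution function `1 / 2 + arctan (t / σ) / π`, so the
substitution `t = σ tan θ` turns the integrand into `σ cos θ ^ (n - 1) (1 / 2 + θ / π) ^ (m - n)`.
Only angles within `O(1 / m)` of `π / 2` contribute, and in the rescaled angle `y` given by
`θ = π / 2 - π y / m` the quantity becomes
`σ π ^ n ∫ ((m / π) sin (π y / m)) ^ (n - 1) (1 - y / m) ^ (m - n) dy`
over `y` between `c m` and `m - c m`, where `c m = m arctan (σ r / m) / π → σ r / π`.

The integrand tends to `y ^ (n - 1) exp (-y)`, and dominated convergence applies because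
`(1 - y / m) ^ (m - n) ≤ exp (-y / 2)` for `m ≥ 2 n`, while `(m / π) sin (π y / m)` lies between a
positive constant and `y`. The lower bound, which comes from the cut-off, makes the argument work
for every real exponent in place of `n - 1`.
-/

open Filter Real MeasureTheory

open scoped Topology

lemma Gamma_mul_gammaU {x : ℝ} (hx : Gamma x ≠ 0) (R : ℝ) :
    Gamma x * gammaU x R = ∫ t in Set.Ioi R, t ^ (x - 1) * exp (-t) :=
  mul_div_cancel₀ _ hx

lemma integrableOn_rpow_mul_exp_neg_mul_Ioi (s : ℝ) {b δ : ℝ} (hb : 0 < b) (hδ : 0 < δ) :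
    IntegrableOn (fun y => y ^ s * exp (-b * y)) (Set.Ioi δ) := by
  have hcont : ContinuousOn (fun y : ℝ => y ^ s * exp (-b * y)) (Set.Ici δ) :=
    (continuousOn_id.rpow_const fun y hy => .inl (hδ.trans_le hy).ne').mul (by fun_prop)
  have hdecay : (fun y : ℝ => y ^ s * exp (-b * y)) =O[atTop] fun y => exp (-(b / 2) * y) := by
    simpa only [mul_comm] using
      (isLittleO_exp_mul_rpow_of_lt s (show -b < -(b / 2) by linarith)).isBigO
  exact integrable_of_isBigO_exp_neg (half_pos hb) hcont hdecay

lemma rpow_le_rpow_add_rpow_of_mem_Icc (s : ℝ) {ε w y : ℝ} (hε : 0 < ε) (hw : w ∈ Set.Icc ε y) :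
    w ^ s ≤ ε ^ s + y ^ s := by
  have hw0 : 0 < w := hε.trans_le hw.1
  have hy0 : 0 < y := hw0.trans_le hw.2
  rcases le_total 0 s with hs | hs
  · linarith [rpow_le_rpow hw0.le hw.2 hs, rpow_nonneg hε.le s]
  · linarith [rpow_le_rpow_of_nonpos hε hw.1 hs, rpow_nonneg hy0.le s]

lemma two_div_pi_mul_min_le_sin {x : ℝ} (h0 : 0 ≤ x) (hπ : x ≤ π) :
    2 / π * min x (π - x) ≤ sin x := by
  rcases le_total x (π / 2) with hx | hx
  · rw [min_eq_left (by linarith)]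
    exact mul_le_sin h0 hx
  · rw [min_eq_right (by linarith), ← sin_pi_sub]
    exact mul_le_sin (by linarith) (by linarith)

lemma tendsto_natCast_mul_comp_div {f : ℝ → ℝ} {f' : ℝ} (hf : HasDerivAt f f' 0) (h0 : f 0 = 0)
    (c : ℝ) : Tendsto (fun m : ℕ => (m : ℝ) * f (c / m)) atTop (𝓝 (c * f')) := by
  simpa [h0, div_eq_inv_mul, Function.comp_def] using
    (hf.hasFDerivAt.lim_real c).comp tendsto_natCast_atTop_atTop

lemma tendsto_one_sub_div_pow_sub (k : ℕ) (y : ℝ) :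
    Tendsto (fun m : ℕ => (1 - y / m) ^ (m - k)) atTop (𝓝 (exp (-y))) := by
  have hbase : Tendsto (fun m : ℕ => 1 - y / (m : ℝ)) atTop (𝓝 1) := by
    simpa using (tendsto_const_div_atTop_nhds_zero_nat y).const_sub 1
  have hpow : Tendsto (fun m : ℕ => (1 - y / (m : ℝ)) ^ m) atTop (𝓝 (exp (-y))) := by
    simpa [neg_div, sub_eq_add_neg] using tendsto_one_add_div_pow_exp (-y)
  have hquot : Tendsto (fun m : ℕ => (1 - y / (m : ℝ)) ^ m / (1 - y / m) ^ k) atTop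
      (𝓝 (exp (-y))) := by
    simpa using! hpow.div (hbase.pow k) (by simp)
  refine hquot.congr' ?_
  filter_upwards [hbase.eventually_ne one_ne_zero, eventually_ge_atTop k] with m hm hk
  rw [div_eq_iff (pow_ne_zero k hm), ← pow_add, Nat.sub_add_cancel hk]

lemma one_sub_div_pow_sub_le_exp {k m : ℕ} (hm : 0 < m) (hk : 2 * k ≤ m) {y : ℝ} (h0 : 0 ≤ y)
    (hy : y ≤ m) : (1 - y / m) ^ (m - k) ≤ exp (-(1 / 2) * y) := by
  have hm0 : (0 : ℝ) < m := Nat.cast_pos.2 hm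
  have hk' : (2 : ℝ) * k ≤ m := mod_cast hk
  have hbase : 0 ≤ 1 - y / m := sub_nonneg.2 ((div_le_one hm0).2 hy)
  have hexponent : (1 / 2) * y ≤ (m - k) * (y / m) :=
    calc (1 / 2) * y = (m / 2) * (y / m) := by field_simp
      _ ≤ (m - k) * (y / m) := by gcongr; linarith
  calc (1 - y / m) ^ (m - k) ≤ exp (-(y / m)) ^ (m - k) := by
        gcongr; exact one_sub_le_exp_neg _
    _ = exp (-((m - k) * (y / m))) := by
        rw [← exp_nat_mul, Nat.cast_sub (by omega), mul_neg]
    _ ≤ exp (-(1 / 2) * y) := by rw [exp_le_exp]; linarith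

section DominatedConvergence

variable {ι : Type*} {l : Filter ι} {a b : ι → ℝ} {R : ℝ}

lemma tendsto_indicator_Ioc {E : Type*} [TopologicalSpace E] [Zero E] {F : ι → ℝ → E}
    {f : ℝ → E} {y : ℝ} (ha : Tendsto a l (𝓝 R)) (hb : Tendsto b l atTop)
    (hy : y ≠ R) (hF : R < y → Tendsto (F · y) l (𝓝 (f y))) :
    Tendsto (fun i => (Set.Ioc (a i) (b i)).indicator (F i) y) l
      (𝓝 ((Set.Ioi R).indicator f y)) := by
  rcases hy.lt_or_gt with hlt | hgt
  · rw [Set.indicator_of_notMem (Set.notMem_Ioi.2 hlt.le)]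
    refine tendsto_const_nhds.congr' ?_
    filter_upwards [ha.eventually_const_lt hlt] with i hi
    rw [Set.indicator_of_notMem fun h => hi.not_gt h.1]
  · rw [Set.indicator_of_mem (Set.mem_Ioi.2 hgt)]
    refine (hF hgt).congr' ?_
    filter_upwards [ha.eventually_lt_const hgt, hb.eventually_ge_atTop y] with i hai hbi
    rw [Set.indicator_of_mem (Set.mem_Ioc.2 ⟨hai, hbi⟩)]

theorem tendsto_intervalIntegral_integral_Ioi_of_dominated {E : Type*} [NormedAddCommGroup E]
    [NormedSpace ℝ E] [l.IsCountablyGenerated] {μ : Measure ℝ} [NullSingletonClass μ]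
    {F : ι → ℝ → E} {f : ℝ → E} {bound : ℝ → ℝ} {δ : ℝ}
    (ha : Tendsto a l (𝓝 R)) (hb : Tendsto b l atTop) (hδ : δ < R)
    (hF : ∀ᶠ i in l, AEStronglyMeasurable (F i) μ)
    (hbound : ∀ᶠ i in l, ∀ y ∈ Set.Ioc (a i) (b i), ‖F i y‖ ≤ bound y)
    (hint : IntegrableOn bound (Set.Ioi δ) μ)
    (hlim : ∀ y, R < y → Tendsto (F · y) l (𝓝 (f y))) :
    Tendsto (fun i => ∫ y in a i..b i, F i y ∂μ) l (𝓝 (∫ y in Set.Ioi R, f y ∂μ)) := by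
  have hindicator : Tendsto (fun i => ∫ y, (Set.Ioc (a i) (b i)).indicator (F i) y ∂μ) l
      (𝓝 (∫ y, (Set.Ioi R).indicator f y ∂μ)) := by
    refine tendsto_integral_filter_of_dominated_convergence
      ((Set.Ioi δ).indicator fun y => ‖bound y‖) ?_ ?_ ?_ ?_
    · filter_upwards [hF] with i hi using hi.indicator measurableSet_Ioc
    · filter_upwards [hbound, ha.eventually_const_lt hδ] with i hi hδi
      refine .of_forall fun y => ?_
      by_cases hy : y ∈ Set.Ioc (a i) (b i)
      · rw [Set.indicator_of_mem hy, Set.indicator_of_mem (Set.mem_Ioi.2 (hδi.trans hy.1))]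
        exact (hi y hy).trans (le_norm_self _)
      · rw [Set.indicator_of_notMem hy, norm_zero]
        exact Set.indicator_nonneg (fun _ _ => norm_nonneg _) y
    · exact IntegrableOn.integrable_indicator hint.norm measurableSet_Ioi
    · filter_upwards [Measure.ae_ne μ R] with y hy using tendsto_indicator_Ioc ha hb hy (hlim y)
  rw [integral_indicator measurableSet_Ioi] at hindicator
  refine hindicator.congr' ?_
  filter_upwards [ha.eventually_lt_const (lt_add_one R), hb.eventually_ge_atTop (R + 1)]
    with i hai hbi
  rw [integral_indicator measurableSet_Ioc, intervalIntegral.integral_of_le (hai.le.trans hbi)]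

end DominatedConvergence

lemma inv_mul_integral_Iic_inv_one_add_div_sq {σ : ℝ} (hσ : 0 < σ) (t : ℝ) :
    (σ * π)⁻¹ * ∫ s in Set.Iic t, (1 + s ^ 2 / σ ^ 2)⁻¹ = 1 / 2 + arctan (t / σ) / π := by
  have hreflect : ∫ s in Set.Iic t, (1 + s ^ 2 / σ ^ 2)⁻¹ =
      ∫ s in Set.Ioi (-t), (1 + s ^ 2 / σ ^ 2)⁻¹ := by
    rw [← integral_comp_neg_Iic]
    simp only [neg_sq]
  have hscale : ∫ s in Set.Ioi (-t), (1 + s ^ 2 / σ ^ 2)⁻¹ = σ * (π / 2 + arctan (t / σ)) := by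
    have hcomp := integral_comp_mul_left_Ioi (fun s : ℝ => (1 + s ^ 2)⁻¹) (-t) (inv_pos.2 hσ)
    simpa only [inv_inv, inv_mul_eq_div, neg_div, div_pow, integral_Ioi_inv_one_add_sq,
      arctan_neg, sub_neg_eq_add, smul_eq_mul] using hcomp
  rw [hreflect, hscale]
  field_simp

lemma one_add_sq_rpow_eq_cos_arctan_rpow (a x : ℝ) :
    (1 + x ^ 2) ^ (-((a + 1) / 2)) = cos (arctan x) ^ (a - 1) * (1 / (1 + x ^ 2)) := by
  have hcos := cos_arctan_pos x
  have hbase : 1 + x ^ 2 = cos (arctan x) ^ (-2 : ℝ) := by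
    rw [rpow_neg hcos.le, rpow_two, cos_sq_arctan, one_div, inv_inv]
  rw [hbase, ← rpow_mul hcos.le, one_div, ← rpow_neg hcos.le, ← rpow_add hcos]
  ring_nf

lemma integral_one_add_sq_rpow_mul_comp_arctan (a p q : ℝ) {f : ℝ → ℝ} (hf : Continuous f) :
    ∫ x in p..q, (1 + x ^ 2) ^ (-((a + 1) / 2)) * f (arctan x) =
      ∫ θ in arctan p..arctan q, cos θ ^ (a - 1) * f θ := by
  have hcont : ContinuousOn (fun θ => cos θ ^ (a - 1) * f θ) (arctan '' Set.uIcc p q) := by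
    refine (continuous_cos.continuousOn.rpow_const ?_).mul hf.continuousOn
    rintro _ ⟨x, -, rfl⟩
    exact .inl (cos_arctan_pos x).ne'
  have hderiv : Continuous fun x : ℝ => 1 / (1 + x ^ 2) :=
    continuous_const.div (by fun_prop) fun x => by positivity
  rw [← intervalIntegral.integral_comp_mul_deriv' (fun x _ => hasDerivAt_arctan x)
    hderiv.continuousOn hcont]
  refine intervalIntegral.integral_congr fun x _ => ?_
  simp only [Function.comp_apply, one_add_sq_rpow_eq_cos_arctan_rpow]
  ring

lemma integral_weight_mul_cdf_pow_eq_integral_cos_rpow (a : ℝ) {σ : ℝ} (hσ : 0 < σ) (p q : ℝ)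
    (j : ℕ) :
    ∫ t in p..q, (1 + t ^ 2 / σ ^ 2) ^ (-((a + 1) / 2)) *
        ((σ * π)⁻¹ * ∫ s in Set.Iic t, (1 + s ^ 2 / σ ^ 2)⁻¹) ^ j =
      σ * ∫ θ in arctan (p / σ)..arctan (q / σ), cos θ ^ (a - 1) * (1 / 2 + θ / π) ^ j := by
  simp only [inv_mul_integral_Iic_inv_one_add_div_sq hσ]
  simp only [← div_pow]
  rw [intervalIntegral.integral_comp_div
      (fun x => (1 + x ^ 2) ^ (-((a + 1) / 2)) * (1 / 2 + arctan x / π) ^ j) hσ.ne',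
    integral_one_add_sq_rpow_mul_comp_arctan a _ _ (f := fun θ => (1 / 2 + θ / π) ^ j)
      (by fun_prop), smul_eq_mul]

/-- The cut-off `y` at which the rescaled angle `θ = π / 2 - π y / m` satisfies `tan θ = m / c`. -/
noncomputable def angularCutoff (c : ℝ) (m : ℕ) : ℝ := m * arctan (c / m) / π

/-- The weight `cos θ ^ s` times the power `(1 / 2 + θ / π) ^ (m - k)` of the Cauchy distribution
function, in the rescaled angle `θ = π / 2 - π y / m` and with `cos θ` multiplied by `m / π` so
that it converges as `m → ∞`. -/
noncomputable def angularIntegrand (s : ℝ) (k m : ℕ) (y : ℝ) : ℝ :=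
  (m * sin (π * y / m) / π) ^ s * (1 - y / m) ^ (m - k)

lemma tendsto_angularCutoff (c : ℝ) : Tendsto (angularCutoff c) atTop (𝓝 (c / π)) := by
  simpa using! (tendsto_natCast_mul_comp_div (hasDerivAt_arctan 0) arctan_zero c).div_const π

lemma angularCutoff_nonneg {c : ℝ} (hc : 0 ≤ c) (m : ℕ) : 0 ≤ angularCutoff c m :=
  div_nonneg (mul_nonneg m.cast_nonneg (arctan_nonneg.2 (by positivity))) pi_pos.le

lemma angularCutoff_le_half (c : ℝ) (m : ℕ) : angularCutoff c m ≤ m / 2 := by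
  rw [angularCutoff, div_le_iff₀ pi_pos]
  calc (m : ℝ) * arctan (c / m) ≤ m * (π / 2) := by gcongr; exact (arctan_lt_pi_div_two _).le
    _ = m / 2 * π := by ring

lemma integral_neg_arctan_arctan {E : Type*} [NormedAddCommGroup E] [NormedSpace ℝ E] {c : ℝ}
    (hc : 0 < c) {m : ℕ} (hm : 0 < m) (f : ℝ → E) :
    ∫ θ in -arctan (m / c)..arctan (m / c), f θ =
      (π / m) • ∫ y in angularCutoff c m..m - angularCutoff c m, f (π / 2 - π * y / m) := by
  have hm0 : (0 : ℝ) < m := Nat.cast_pos.2 hm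
  have hupper : arctan (m / c) = π / 2 - π / m * angularCutoff c m := by
    rw [← inv_div, arctan_inv_of_pos (div_pos hc hm0), angularCutoff]
    field_simp
  have hlower : -arctan (m / c) = π / 2 - π / m * (m - angularCutoff c m) := by
    rw [hupper]
    field_simp
    ring
  simp only [← div_mul_eq_mul_div]
  rw [hlower, hupper, ← intervalIntegral.smul_integral_comp_sub_mul]

lemma rpow_mul_cos_rpow_mul_pow_eq_angularIntegrand (a : ℝ) (k : ℕ) {m : ℕ} (hm : 0 < m) {y : ℝ}
    (hy : y ∈ Set.Icc (0 : ℝ) m) :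
    (m : ℝ) ^ a * (π / m) *
        (cos (π / 2 - π * y / m) ^ (a - 1) * (1 / 2 + (π / 2 - π * y / m) / π) ^ (m - k)) =
      π ^ a * angularIntegrand (a - 1) k m y := by
  have hm0 : (0 : ℝ) < m := Nat.cast_pos.2 hm
  have hangle : π * y / m ∈ Set.Icc 0 π :=
    ⟨by have := hy.1; positivity, by rw [div_le_iff₀ hm0]; gcongr; exact hy.2⟩
  have hsin : 0 ≤ sin (π * y / m) := sin_nonneg_of_mem_Icc hangle
  have hcdf : 1 / 2 + (π / 2 - π * y / m) / π = 1 - y / m := by field_simp; ring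
  rw [angularIntegrand, cos_pi_div_two_sub, hcdf, mul_div_right_comm (m : ℝ),
    mul_rpow (by positivity) hsin, div_rpow hm0.le pi_pos.le, rpow_sub_one hm0.ne',
    rpow_sub_one pi_ne_zero]
  field_simp

theorem rpow_mul_integral_eq_integral_angularIntegrand (a : ℝ) (k : ℕ) {σ r : ℝ} (hσ : 0 < σ)
    (hr : 0 < r) {m : ℕ} (hm : 0 < m) :
    (m : ℝ) ^ a * ∫ t in (-(m / r : ℝ))..(m / r : ℝ),
        (1 + t ^ 2 / σ ^ 2) ^ (-((a + 1) / 2)) *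
          ((σ * π)⁻¹ * ∫ s in Set.Iic t, (1 + s ^ 2 / σ ^ 2)⁻¹) ^ (m - k) =
      σ * π ^ a * ∫ y in angularCutoff (σ * r) m..m - angularCutoff (σ * r) m,
        angularIntegrand (a - 1) k m y := by
  have hσr : 0 < σ * r := mul_pos hσ hr
  have hcutoff := angularCutoff_nonneg hσr.le m
  rw [integral_weight_mul_cdf_pow_eq_integral_cos_rpow a hσ, neg_div, arctan_neg, div_div,
    mul_comm r, integral_neg_arctan_arctan hσr hm, smul_eq_mul, mul_left_comm, mul_assoc σ,
    ← mul_assoc (_ ^ a)]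
  congr 1
  rw [← intervalIntegral.integral_const_mul, ← intervalIntegral.integral_const_mul]
  refine intervalIntegral.integral_congr fun y hy => ?_
  rw [Set.uIcc_of_le (by linarith [angularCutoff_le_half (σ * r) m])] at hy
  exact rpow_mul_cos_rpow_mul_pow_eq_angularIntegrand a k hm
    ⟨hcutoff.trans hy.1, hy.2.trans (sub_le_self _ hcutoff)⟩

lemma tendsto_angularIntegrand (s : ℝ) (k : ℕ) {y : ℝ} (hy : y ≠ 0) :
    Tendsto (fun m => angularIntegrand s k m y) atTop (𝓝 (y ^ s * exp (-y))) := by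
  have hsin : Tendsto (fun m : ℕ => m * sin (π * y / m) / π) atTop (𝓝 y) := by
    simpa [pi_ne_zero] using
      (tendsto_natCast_mul_comp_div (hasDerivAt_sin 0) sin_zero (π * y)).div_const π
  exact (hsin.rpow_const (.inl hy)).mul (tendsto_one_sub_div_pow_sub k y)

lemma mul_sin_div_pi_mem_Icc {m δ y : ℝ} (hδ : 0 < δ) (hy : y ∈ Set.Icc δ (m - δ)) :
    m * sin (π * y / m) / π ∈ Set.Icc (2 * δ / π) y := by
  obtain ⟨hδy, hym⟩ := hy
  have hy0 : 0 < y := hδ.trans_le hδy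
  have hm : 0 < m := by linarith
  have hangle : π * y / m ≤ π := by rw [div_le_iff₀ hm]; gcongr; linarith
  have hmin : π * δ / m ≤ min (π * y / m) (π - π * y / m) := by
    refine le_min (by gcongr) ?_
    rw [le_sub_iff_add_le, ← add_div, ← mul_add, div_le_iff₀ hm]
    gcongr
    linarith
  constructor
  · calc 2 * δ / π = m * (2 / π * (π * δ / m)) / π := by field_simp
      _ ≤ m * (2 / π * min (π * y / m) (π - π * y / m)) / π := by gcongr
      _ ≤ m * sin (π * y / m) / π := by
        gcongr; exact two_div_pi_mul_min_le_sin (by positivity) hangle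
  · calc m * sin (π * y / m) / π ≤ m * (π * y / m) / π := by
          gcongr; exact sin_le (by positivity)
      _ = y := by field_simp

lemma norm_angularIntegrand_le (s : ℝ) {k m : ℕ} (hk : 2 * k ≤ m) {δ y : ℝ} (hδ : 0 < δ)
    (hy : y ∈ Set.Icc δ (m - δ)) :
    ‖angularIntegrand s k m y‖ ≤ ((2 * δ / π) ^ s + y ^ s) * exp (-(1 / 2) * y) := by
  have hweight := mul_sin_div_pi_mem_Icc hδ hy
  have hε : 0 < 2 * δ / π := by positivity
  have hy0 : 0 < y := hδ.trans_le hy.1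
  have hym : y ≤ m := by linarith [hy.2]
  have hm0 : (0 : ℝ) < m := hy0.trans_le hym
  have hbase : 0 ≤ 1 - y / m := sub_nonneg.2 ((div_le_one hm0).2 hym)
  rw [angularIntegrand, norm_of_nonneg
    (mul_nonneg (rpow_nonneg (hε.le.trans hweight.1) s) (pow_nonneg hbase _))]
  gcongr
  · exact rpow_le_rpow_add_rpow_of_mem_Icc s hε hweight
  · exact one_sub_div_pow_sub_le_exp (Nat.cast_pos.1 hm0) hk hy0.le hym

lemma integrableOn_const_add_rpow_mul_exp_neg_mul_Ioi (C s : ℝ) {b δ : ℝ} (hb : 0 < b)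
    (hδ : 0 < δ) : IntegrableOn (fun y => (C + y ^ s) * exp (-b * y)) (Set.Ioi δ) := by
  simpa only [add_mul] using! ((exp_neg_integrableOn_Ioi δ hb).const_mul C).add
    (integrableOn_rpow_mul_exp_neg_mul_Ioi s hb hδ)

theorem tendsto_integral_angularIntegrand (s : ℝ) (k : ℕ) {R : ℝ} (hR : 0 < R) {c : ℕ → ℝ}
    (hc : Tendsto c atTop (𝓝 R)) :
    Tendsto (fun m : ℕ => ∫ y in c m..m - c m, angularIntegrand s k m y) atTop
      (𝓝 (∫ y in Set.Ioi R, y ^ s * exp (-y))) := by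
  have hupper : Tendsto (fun m : ℕ => (m : ℝ) - c m) atTop atTop := by
    simpa only [sub_eq_add_neg] using tendsto_natCast_atTop_atTop.atTop_add hc.neg
  have hbound : ∀ᶠ m : ℕ in atTop, ∀ y ∈ Set.Ioc (c m) (m - c m),
      ‖angularIntegrand s k m y‖ ≤ ((2 * (R / 2) / π) ^ s + y ^ s) * exp (-(1 / 2) * y) := by
    filter_upwards [hc.eventually_const_lt (half_lt_self hR), eventually_ge_atTop (2 * k)]
      with m hcm hm y hy
    exact norm_angularIntegrand_le s hm (half_pos hR)
      ⟨by linarith [hy.1], by linarith [hy.2]⟩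
  refine tendsto_intervalIntegral_integral_Ioi_of_dominated hc hupper (half_lt_self hR)
    (.of_forall fun m => ?_) hbound
    (integrableOn_const_add_rpow_mul_exp_neg_mul_Ioi _ s one_half_pos (half_pos hR))
    fun y hy => tendsto_angularIntegrand s k (hR.trans hy).ne'
  unfold angularIntegrand
  exact Measurable.aestronglyMeasurable (by fun_prop)

theorem facet_integral_asymptotics_general (a : ℝ) (k : ℕ) {σ r : ℝ} (hσ : 0 < σ) (hr : 0 < r) :
    Tendsto (fun m : ℕ =>
        (m : ℝ) ^ a *
          ∫ t in (-(m / r : ℝ))..(m / r : ℝ),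
            (1 + t ^ 2 / σ ^ 2) ^ (-((a + 1) / 2)) *
              ((σ * π)⁻¹ * ∫ s in Set.Iic t, (1 + s ^ 2 / σ ^ 2)⁻¹) ^ (m - k))
      atTop (𝓝 (σ * π ^ a * ∫ y in Set.Ioi (σ * r / π), y ^ (a - 1) * exp (-y))) := by
  have hR : 0 < σ * r / π := by positivity
  have hlim := tendsto_integral_angularIntegrand (a - 1) k hR (tendsto_angularCutoff (σ * r))
  refine (hlim.const_mul (σ * π ^ a)).congr' ?_
  filter_upwards [eventually_gt_atTop 0] with m hm
  exact (rpow_mul_integral_eq_integral_angularIntegrand a k hσ hr hm).symm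

/-- Asymptotics of the facet-probability integral for convex hulls of beta prime points. -/
theorem facet_integral_asymptotics (n : ℕ) (hn : 1 ≤ n) (σ r : ℝ) (hσ : 0 < σ) (hr : 0 < r) :
    Tendsto (fun m : ℕ =>
        (m : ℝ) ^ n *
          ∫ t in (-(m / r : ℝ))..(m / r : ℝ),
            (1 + t ^ 2 / σ ^ 2) ^ (-(((n : ℝ) + 1) / 2)) *
              ((σ * Real.pi)⁻¹ * ∫ s in Set.Iic t, (1 + s ^ 2 / σ ^ 2)⁻¹) ^ (m - n))
      atTop
      (nhds (σ * Real.pi ^ n * Real.Gamma n * gammaU n (σ * r / Real.pi))) := by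
  rw [mul_assoc, Gamma_mul_gammaU (Gamma_pos_of_pos (Nat.cast_pos.2 hn)).ne']
  simpa only [rpow_natCast] using facet_integral_asymptotics_general n n hσ hr
end
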